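/- arXiv:math/9910145 — 3 statements merged into one kernel-verified Lean document; each statement's English description precedes it below -/
import Mathlib

section
/- There exists a constant C > 0 (depending on A) such that for every integer N ≥ 3, ord(A,N) ≤ C·N·log log N. -/
/-!
Modulo a prime `p`, the matrix `A` and its image `A ^ p` under Frobenius are both roots of the
characteristic polynomial `X² - tX + 1`. If this polynomial is irreducible, `A ^ p` is one of its
two roots `A`, `t - A = A⁻¹`; if it has distinct roots in the prime field, `A ^ p = A`; if it has
a double root, that root is `±1` and `A ^ p = ±1`. So for odd `p` the square of `A` has order at
most `p` modulo `p`, and modulo `2` the order of `A` divides `6`. Passing from `p` to `p ^ k`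
multiplies the order by at most `p ^ (k - 1)`, and the Chinese remainder theorem then bounds the
order of `A ^ 2` modulo an odd `M` by `M`. For `k ≥ 1` the order of `A` modulo `2 ^ k` divides the
even number `3 * 2 ^ k`, which absorbs the exponent `2` of `A ^ 2` when `N = 2 ^ k * M` is even. Hence the
order of `A` modulo `N` is at most `3 * N`, and `N` is bounded by a multiple of `N log log N`.
-/

open Matrix

/-- `matOrd A N` is the order of `A` modulo `N`: the least `k ≥ 1`
with `A^k ≡ I (mod N)`. -/
noncomputable def matOrd (A : Matrix (Fin 2) (Fin 2) ℤ) (N : ℕ) : ℕ :=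
  sInf {k | 0 < k ∧ ∀ i j, (N : ℤ) ∣ (A ^ k - 1) i j}

open Polynomial

section CommRing

variable {R : Type*} [CommRing R]

/-- The polynomial `X² - tX + 1`, which is the characteristic polynomial of a `2 × 2` matrix of
trace `t` and determinant `1`. -/
noncomputable def normOnePoly (t : R) : R[X] :=
  X ^ 2 - C t * X + 1

lemma natDegree_normOnePoly [Nontrivial R] (t : R) : (normOnePoly t).natDegree = 2 := by
  rw [normOnePoly]
  compute_degree!

lemma monic_normOnePoly (t : R) : (normOnePoly t).Monic := by
  rw [normOnePoly]
  monicity!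

lemma normOnePoly_add_of_mul_eq_one {a b : R} (hab : a * b = 1) :
    normOnePoly (a + b) = (X - C a) * (X - C b) := by
  have hC : (C a * C b : R[X]) = 1 := by rw [← C_mul, hab, C_1]
  rw [normOnePoly, C_add]
  linear_combination -hC

lemma aeval_normOnePoly {S : Type*} [Ring S] [Algebra R S] (x : S) (t : R) :
    aeval x (normOnePoly t) = x ^ 2 - algebraMap R S t * x + 1 := by
  simp [normOnePoly]

lemma mul_sub_eq_one_of_aeval_normOnePoly {S : Type*} [Ring S] [Algebra R S] {x : S} {t : R}
    (hx : aeval x (normOnePoly t) = 0) : x * (algebraMap R S t - x) = 1 := by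
  rw [aeval_normOnePoly, Algebra.commutes] at hx
  rw [mul_sub, ← sq, ← sub_eq_zero, ← neg_eq_zero, ← hx]
  abel

lemma charpoly_eq_normOnePoly [Nontrivial R] {A : Matrix (Fin 2) (Fin 2) R} (hA : A.det = 1) :
    A.charpoly = normOnePoly A.trace := by
  rw [charpoly_fin_two, hA, C_1, normOnePoly]

lemma aeval_normOnePoly_trace [Nontrivial R] {A : Matrix (Fin 2) (Fin 2) R} (hA : A.det = 1) :
    aeval A (normOnePoly A.trace) = 0 := by
  rw [← charpoly_eq_normOnePoly hA, aeval_self_charpoly]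

end CommRing

section FiniteField

variable {K : Type*} [Field K] [Fintype K]

local notation "q" => Fintype.card K

lemma normOnePoly_dvd_X_pow_card_sub_mul_X_pow_card_sub (t : K) :
    normOnePoly t ∣ (X ^ q - X) * (X ^ q - (C t - X)) := by
  have hFrobenius : normOnePoly t ^ q = (X ^ q) ^ 2 - C t * X ^ q + 1 := by
    rw [← FiniteField.expand_card]
    simp [normOnePoly]
  have hprod : (X ^ q - X) * (X ^ q - (C t - X)) = normOnePoly t ^ q - normOnePoly t := by
    rw [hFrobenius, normOnePoly]
    ring
  rw [hprod]
  exact dvd_sub (dvd_pow_self _ Fintype.card_ne_zero) dvd_rfl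

lemma X_sub_C_mul_X_sub_C_dvd_X_pow_card_sub_X {a b : K} (hab : a ≠ b) :
    (X - C a) * (X - C b) ∣ X ^ q - X := by
  have hroot (c : K) : X - C c ∣ X ^ q - X := by
    simp [dvd_iff_isRoot, FiniteField.pow_card]
  exact (isCoprime_X_sub_C_of_isUnit_sub (sub_ne_zero.2 hab).isUnit).mul_dvd (hroot a) (hroot b)

lemma X_sub_C_sq_dvd_X_pow_card_sub_C (a : K) : (X - C a) ^ 2 ∣ X ^ q - C a := by
  have hFrobenius : (X - C a) ^ q = X ^ q - C a := by
    rw [← FiniteField.expand_card]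
    simp
  rw [← hFrobenius]
  exact pow_dvd_pow _ Fintype.one_lt_card

lemma normOnePoly_dvd_X_pow_card_sub_or_add (t : K) :
    normOnePoly t ∣ X ^ q - X ∨ normOnePoly t ∣ X ^ q - (C t - X) ∨
      normOnePoly t ∣ X ^ q - 1 ∨ normOnePoly t ∣ X ^ q + 1 := by
  by_cases hirr : Irreducible (normOnePoly t)
  · exact (hirr.prime.dvd_or_dvd (normOnePoly_dvd_X_pow_card_sub_mul_X_pow_card_sub t)).imp_right
      .inl
  obtain ⟨c, d, hmul, hadd⟩ := ((monic_normOnePoly t).not_irreducible_iff_exists_add_mul_eq_coeff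
    (natDegree_normOnePoly t)).1 hirr
  obtain ⟨a, b, rfl, hab⟩ : ∃ a b, t = a + b ∧ a * b = 1 := by
    refine ⟨-c, -d, ?_, ?_⟩
    · have hsum : -t = c + d := by simpa [normOnePoly, coeff_one] using hadd
      linear_combination -hsum
    · have hprod : 1 = c * d := by simpa [normOnePoly] using hmul
      linear_combination -hprod
  rw [normOnePoly_add_of_mul_eq_one hab]
  rcases ne_or_eq a b with hne | rfl
  · exact .inl (X_sub_C_mul_X_sub_C_dvd_X_pow_card_sub_X hne)
  have hdvd := X_sub_C_sq_dvd_X_pow_card_sub_C a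
  rw [← sq]
  rcases mul_self_eq_one_iff.1 hab with rfl | rfl
  · exact .inr (.inr (.inl (by simpa using hdvd)))
  · exact .inr (.inr (.inr (by simpa using hdvd)))

variable {S : Type*} [Ring S] [Algebra K S] {x : S} {t : K}

lemma pow_card_sub_one_or_add_one_or_card_eq (hx : aeval x (normOnePoly t) = 0) :
    x ^ (q - 1) = 1 ∨ x ^ (q + 1) = 1 ∨ x ^ q = 1 ∨ x ^ q = -1 := by
  have hinv := mul_sub_eq_one_of_aeval_normOnePoly hx
  have hroot {f : K[X]} (hf : normOnePoly t ∣ f) : aeval x f = 0 := by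
    simpa [hx] using map_dvd (aeval x) hf
  rcases normOnePoly_dvd_X_pow_card_sub_or_add t with h | h | h | h <;> replace h := hroot h
  · have hinv' : (algebraMap K S t - x) * x = 1 := by
      rwa [sub_mul, Algebra.commutes, ← mul_sub]
    have hcard : x ^ q = x := by simpa [sub_eq_zero] using h
    left
    calc x ^ (q - 1) = (algebraMap K S t - x) * x * x ^ (q - 1) := by rw [hinv', one_mul]
      _ = 1 := by rw [mul_assoc, mul_pow_sub_one Fintype.card_ne_zero, hcard, hinv']
  · have hcard : x ^ q = algebraMap K S t - x := by simpa [sub_eq_zero] using h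
    exact .inr (.inl (by rw [pow_succ', hcard, hinv]))
  · exact .inr (.inr (.inl (by simpa [sub_eq_zero] using h)))
  · exact .inr (.inr (.inr (by simpa [add_eq_zero_iff_eq_neg] using h)))

lemma exists_sq_pow_eq_one_of_odd_card (hq : Odd q) (hx : aeval x (normOnePoly t) = 0) :
    ∃ m, 0 < m ∧ m ≤ q ∧ (x ^ 2) ^ m = 1 := by
  have hq1 : 1 < q := Fintype.one_lt_card
  obtain ⟨r, hr⟩ := hq
  simp only [← pow_mul]
  rcases pow_card_sub_one_or_add_one_or_card_eq hx with h | h | h | h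
  · exact ⟨r, by lia, by lia, by rwa [show 2 * r = q - 1 by lia]⟩
  · exact ⟨r + 1, by lia, by lia, by rwa [show 2 * (r + 1) = q + 1 by lia]⟩
  · exact ⟨q, by lia, le_rfl, by rw [mul_comm, pow_mul, h, one_pow]⟩
  · exact ⟨q, by lia, le_rfl, by rw [mul_comm, pow_mul, h, neg_one_sq]⟩

lemma pow_six_eq_one_of_card_eq_two (hq : q = 2) (hx : aeval x (normOnePoly t) = 0) :
    x ^ 6 = 1 := by
  have h := pow_card_sub_one_or_add_one_or_card_eq hx
  rw [hq] at h
  rcases h with h | h | h | h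
  · rw [← pow_one x, h, one_pow]
  · rw [show 6 = (2 + 1) * 2 from rfl, pow_mul, h, one_pow]
  · rw [show 6 = 2 * 3 from rfl, pow_mul, h, one_pow]
  · have : CharP K 2 := charP_of_card_eq_prime hq
    have hneg : (-1 : S) = 1 := by
      simpa using congrArg (algebraMap K S) (CharTwo.neg_eq (1 : K))
    rw [show 6 = 2 * 3 from rfl, pow_mul, h, hneg, one_pow]

end FiniteField

section Ring

variable {R : Type*} [Ring R] {x : R}

lemma natCast_mul_dvd_of_coprime {a b : ℕ} (hab : a.Coprime b) (ha : (a : R) ∣ x)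
    (hb : (b : R) ∣ x) : ((a * b : ℕ) : R) ∣ x := by
  obtain ⟨y, hy⟩ := ha
  obtain ⟨z, hz⟩ := hb
  obtain ⟨u, v, huv⟩ := Nat.isCoprime_iff_coprime.2 hab
  refine ⟨u • z + v • y, ?_⟩
  rw [← nsmul_eq_mul] at hy hz ⊢
  calc x = (u * a + v * b) • x := by rw [huv, one_smul]
    _ = (u * a) • (b • z) + (v * b) • (a • y) := by rw [add_smul, ← hy, ← hz]
    _ = (a * b) • (u • z + v • y) := by module

lemma natCast_pow_dvd_pow_sub_one {p n : ℕ} (h : (p : R) ∣ x ^ n - 1) (k : ℕ) :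
    ((p ^ (k + 1) : ℕ) : R) ∣ x ^ (n * p ^ k) - 1 := by
  obtain ⟨c, hc⟩ := h
  -- The congruence holds in the commutative ring `ℤ[X]`; evaluation at `c` carries it to `R`.
  have hgeneric : (p : ℤ[X]) ^ (k + 1) ∣ (1 + (p : ℤ[X]) * X) ^ p ^ k - 1 ^ p ^ k :=
    dvd_sub_pow_of_dvd_sub (by simp) k
  rw [pow_mul, eq_add_of_sub_eq' hc]
  simpa using map_dvd (aeval c) hgeneric

lemma exists_le_natCast_dvd_pow_sub_one {N : ℕ} (hN : N ≠ 0)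
    (h : ∀ p, p.Prime → p ∣ N → ∃ m, 0 < m ∧ m ≤ p ∧ (p : R) ∣ x ^ m - 1) :
    ∃ m, 0 < m ∧ m ≤ N ∧ (N : R) ∣ x ^ m - 1 := by
  induction N using Nat.recOnPosPrimePosCoprime with
  | zero => exact absurd rfl hN
  | one => exact ⟨1, one_pos, le_rfl, by simp⟩
  | prime_pow p n hp hn =>
    obtain ⟨k, rfl⟩ := Nat.exists_eq_succ_of_ne_zero hn.ne'
    obtain ⟨m, hm, hmp, hdvd⟩ := h p hp (dvd_pow_self p hn.ne')
    refine ⟨m * p ^ k, Nat.mul_pos hm (pow_pos hp.pos k), ?_, natCast_pow_dvd_pow_sub_one hdvd k⟩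
    rw [Nat.succ_eq_add_one, pow_succ']
    gcongr
  | coprime a b ha hb hab iha ihb =>
    obtain ⟨m, hm, hma, hmdvd⟩ := iha (by lia) fun p hp hpa => h p hp (hpa.mul_right b)
    obtain ⟨n, hn, hnb, hndvd⟩ := ihb (by lia) fun p hp hpb => h p hp (hpb.mul_left a)
    exact ⟨m * n, Nat.mul_pos hm hn, Nat.mul_le_mul hma hnb, natCast_mul_dvd_of_coprime hab
      (hmdvd.trans (dvd_pow_sub_one_of_dvd (dvd_mul_right m n)))
      (hndvd.trans (dvd_pow_sub_one_of_dvd (dvd_mul_left n m)))⟩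

end Ring

section Matrix

lemma natCast_dvd_matrix_iff {ι R : Type*} [Fintype ι] [DecidableEq ι] [Semiring R] {n : ℕ}
    {M : Matrix ι ι R} : (n : Matrix ι ι R) ∣ M ↔ ∀ i j, (n : R) ∣ M i j := by
  have hmul (Q : Matrix ι ι R) (i j : ι) : ((n : Matrix ι ι R) * Q) i j = n * Q i j := by
    rw [← nsmul_eq_mul, Matrix.smul_apply, nsmul_eq_mul]
  constructor
  · rintro ⟨Q, rfl⟩ i j
    exact ⟨Q i j, hmul Q i j⟩
  · intro h
    choose Q hQ using h
    exact ⟨of Q, Matrix.ext fun i j => by rw [hQ, hmul, of_apply]⟩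

lemma natCast_dvd_iff_mapMatrix_eq_zero {ι : Type*} [Fintype ι] [DecidableEq ι] {N : ℕ}
    {M : Matrix ι ι ℤ} :
    (N : Matrix ι ι ℤ) ∣ M ↔ (Int.castRingHom (ZMod N)).mapMatrix M = 0 := by
  simp [natCast_dvd_matrix_iff, ← Matrix.ext_iff, ← ZMod.intCast_zmod_eq_zero_iff_dvd]

lemma natCast_dvd_pow_sub_one_iff_mapMatrix_pow_eq_one {ι : Type*} [Fintype ι] [DecidableEq ι]
    {N k : ℕ} {A : Matrix ι ι ℤ} :
    (N : Matrix ι ι ℤ) ∣ A ^ k - 1 ↔ (Int.castRingHom (ZMod N)).mapMatrix A ^ k = 1 := by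
  rw [natCast_dvd_iff_mapMatrix_eq_zero, map_sub, map_pow, map_one, sub_eq_zero]

lemma det_mapMatrix_eq_one {ι R S : Type*} [Fintype ι] [DecidableEq ι] [CommRing R] [CommRing S]
    (f : R →+* S) {A : Matrix ι ι R} (hA : A.det = 1) : (f.mapMatrix A).det = 1 := by
  rw [← RingHom.map_det, hA, map_one]

variable {A : Matrix (Fin 2) (Fin 2) ℤ}

lemma exists_natCast_dvd_sq_pow_sub_one_of_odd_prime (hA : A.det = 1) {p : ℕ} (hp : p.Prime)
    (hodd : Odd p) :
    ∃ m, 0 < m ∧ m ≤ p ∧ (p : Matrix (Fin 2) (Fin 2) ℤ) ∣ (A ^ 2) ^ m - 1 := by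
  have : Fact p.Prime := ⟨hp⟩
  simpa only [natCast_dvd_pow_sub_one_iff_mapMatrix_pow_eq_one, map_pow, ZMod.card] using
    exists_sq_pow_eq_one_of_odd_card (by rwa [ZMod.card])
      (aeval_normOnePoly_trace (det_mapMatrix_eq_one (Int.castRingHom (ZMod p)) hA))

lemma two_dvd_pow_six_sub_one (hA : A.det = 1) :
    ((2 : ℕ) : Matrix (Fin 2) (Fin 2) ℤ) ∣ A ^ 6 - 1 :=
  natCast_dvd_pow_sub_one_iff_mapMatrix_pow_eq_one.2 <|
    pow_six_eq_one_of_card_eq_two (ZMod.card 2)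
      (aeval_normOnePoly_trace (det_mapMatrix_eq_one _ hA))

lemma exists_natCast_dvd_sq_pow_sub_one_of_odd (hA : A.det = 1) {N : ℕ} (hN : Odd N) :
    ∃ m, 0 < m ∧ m ≤ N ∧ (N : Matrix (Fin 2) (Fin 2) ℤ) ∣ (A ^ 2) ^ m - 1 :=
  exists_le_natCast_dvd_pow_sub_one hN.pos.ne' fun _ hp hpN =>
    exists_natCast_dvd_sq_pow_sub_one_of_odd_prime hA hp (hN.of_dvd_nat hpN)

lemma exists_natCast_dvd_pow_sub_one (hA : A.det = 1) {N : ℕ} (hN : N ≠ 0) :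
    ∃ m, 0 < m ∧ m ≤ 3 * N ∧ (N : Matrix (Fin 2) (Fin 2) ℤ) ∣ A ^ m - 1 := by
  obtain ⟨k, M, hM, rfl⟩ := Nat.exists_eq_two_pow_mul_odd hN
  obtain ⟨m, hm, hmM, hMdvd⟩ := exists_natCast_dvd_sq_pow_sub_one_of_odd hA hM
  rw [← pow_mul] at hMdvd
  cases k with
  | zero => exact ⟨2 * m, by lia, by lia, by simpa using hMdvd⟩
  | succ k =>
    have hcop : (2 ^ (k + 1)).Coprime M := (Nat.coprime_two_left.2 hM).pow_left _
    have htwo := natCast_pow_dvd_pow_sub_one (two_dvd_pow_six_sub_one hA) k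
    refine ⟨6 * 2 ^ k * m, by positivity, ?_, natCast_mul_dvd_of_coprime hcop
      (htwo.trans (dvd_pow_sub_one_of_dvd (dvd_mul_right _ m)))
      (hMdvd.trans (dvd_pow_sub_one_of_dvd ⟨3 * 2 ^ k, by ring⟩))⟩
    calc 6 * 2 ^ k * m ≤ 6 * 2 ^ k * M := by gcongr
      _ = 3 * (2 ^ (k + 1) * M) := by ring

lemma matOrd_le {N k : ℕ} (hk : 0 < k) (h : (N : Matrix (Fin 2) (Fin 2) ℤ) ∣ A ^ k - 1) :
    matOrd A N ≤ k :=
  Nat.sInf_le ⟨hk, natCast_dvd_matrix_iff.1 h⟩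

end Matrix

lemma exists_mul_le_mul_log_log {c : ℝ} (hc : 0 < c) :
    ∃ C : ℝ, 0 < C ∧ ∀ N : ℕ, 3 ≤ N → c * N ≤ C * N * Real.log (Real.log N) := by
  have hlog3 : 1 < Real.log 3 := by
    rw [Real.lt_log_iff_exp_lt three_pos]
    exact Real.exp_one_lt_three
  have hpos : 0 < Real.log (Real.log 3) := Real.log_pos hlog3
  refine ⟨c / Real.log (Real.log 3), by positivity, fun N hN => ?_⟩
  have hN' : (3 : ℝ) ≤ N := by exact_mod_cast hN
  calc c * N = c / Real.log (Real.log 3) * N * Real.log (Real.log 3) := by field_simp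
    _ ≤ c / Real.log (Real.log 3) * N * Real.log (Real.log N) := by gcongr

theorem order_upper_bound_general {A : Matrix (Fin 2) (Fin 2) ℤ} (hA : A.det = 1) {N : ℕ}
    (hN : N ≠ 0) : matOrd A N ≤ 3 * N := by
  obtain ⟨m, hm, hmN, hdvd⟩ := exists_natCast_dvd_pow_sub_one hA hN
  exact (matOrd_le hm hdvd).trans hmN

/-- There is `C > 0` (depending on `A`) such that for all `N ≥ 3`,
`ord(A,N) ≤ C · N · log log N`. -/
theorem order_upper_bound
    (A : Matrix (Fin 2) (Fin 2) ℤ) (hA : A.det = 1) (htr : 2 < |A.trace|) :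
    ∃ C : ℝ, 0 < C ∧ ∀ N : ℕ, 3 ≤ N →
      (matOrd A N : ℝ) ≤ C * N * Real.log (Real.log N) := by
  obtain ⟨C, hC, hlinear⟩ := exists_mul_le_mul_log_log three_pos
  exact ⟨C, hC, fun N hN => le_trans (mod_cast order_upper_bound_general hA (by lia))
    (hlinear N hN)⟩
end

section
/- There is a constant C > 0 such that for all sufficiently large x, the number of integers N ≤ x for which L(N) has a prime factor exceeding (log log x)³ is at most C·x/log log x. -/
open Matrix Finset

/-- The squarefree part `d` of `N = d·s²`, where `s²` is the largest square
dividing `N`. -/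
noncomputable def sqfPart (N : ℕ) : ℕ :=
  ∏ p ∈ N.primeFactors, p ^ (N.factorization p % 2)

/-- `d₀(N) = d / gcd(d, D_A)` where `N = d·s²` with `d` squarefree and
`D_A = 4(tr(A)² - 4)`. -/
noncomputable def dZero (A : Matrix (Fin 2) (Fin 2) ℤ) (N : ℕ) : ℕ :=
  sqfPart N / Nat.gcd (sqfPart N) (4 * (A.trace ^ 2 - 4)).natAbs

open Classical in
/-- `χ(p) = 1` if `tr(A)² - 4` is a nonzero square mod `p`, `-1` otherwise. -/
noncomputable def chi (A : Matrix (Fin 2) (Fin 2) ℤ) (p : ℕ) : ℤ :=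
  if ((A.trace ^ 2 - 4 : ℤ) : ZMod p) ≠ 0 ∧ IsSquare ((A.trace ^ 2 - 4 : ℤ) : ZMod p)
  then 1 else -1

/-- `L(N) = (∏_{p ∣ d₀(N)} (p - χ(p))) / lcm{p - χ(p) : p ∣ d₀(N)}`. -/
noncomputable def LN (A : Matrix (Fin 2) (Fin 2) ℤ) (N : ℕ) : ℕ :=
  (∏ p ∈ (dZero A N).primeFactors, ((p : ℤ) - chi A p).natAbs) /
    (dZero A N).primeFactors.lcm (fun p => ((p : ℤ) - chi A p).natAbs)

/-!
If a prime `ℓ` divides `L(N) = ∏ (p - χ(p)) / lcm (p - χ(p))`, then it divides `p - χ(p)` for two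
distinct primes `p ∣ N`, and `χ(p) = ±1` gives `p ^ 2 ≡ 1` modulo `ℓ`. At most `x (∑ 1 / p) ^ 2`
integers `N ≤ x` have two distinct prime factors among the primes `p ≤ x` of this kind. Such `p` lie
in two residue classes modulo `ℓ` and, for `ℓ > 3`, are at least `ℓ`; Selberg's sieve bounds their
number in `[2 ^ i ℓ, 2 ^ (i + 1) ℓ)` by `O(2 ^ i / (i + 1))`, so that `∑ 1 / p ≪ log log x / ℓ`.
Summing `x (log log x / ℓ) ^ 2` over `ℓ > (log log x) ^ 3` gives `O(x / log log x)`.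
-/

section SelbergSieve

open ArithmeticFunction BoundingSieve
open scoped ArithmeticFunction.Moebius

lemma sum_divisors_filter_dvd_moebius {h : ℕ} (hh : Squarefree h) (l : ℕ) :
    ∑ d ∈ h.divisors with l ∣ d, μ d = if h = l then μ l else 0 := by
  by_cases hlh : l ∣ h
  · obtain ⟨t, rfl⟩ := hlh
    have hl : l ≠ 0 := left_ne_zero_of_mul hh.ne_zero
    have ht : t ≠ 0 := right_ne_zero_of_mul hh.ne_zero
    have hmultiples : {d ∈ (l * t).divisors | l ∣ d} = t.divisors.image (l * ·) := by
      ext d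
      simp only [mem_filter, Nat.mem_divisors, mem_image]
      constructor
      · rintro ⟨⟨hd, -⟩, e, rfl⟩
        exact ⟨e, ⟨(Nat.mul_dvd_mul_iff_left hl.pos).1 hd, ht⟩, rfl⟩
      · rintro ⟨e, ⟨he, -⟩, rfl⟩
        exact ⟨⟨mul_dvd_mul_left l he, hh.ne_zero⟩, dvd_mul_right l e⟩
    have hmul : ∀ e ∈ t.divisors, μ (l * e) = μ l * μ e := fun e he ↦
      isMultiplicative_moebius.map_mul_of_coprime <| Nat.coprime_of_squarefree_mul <|
        hh.squarefree_of_dvd <| mul_dvd_mul_left l <| Nat.dvd_of_mem_divisors he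
    rw [hmultiples, sum_image (mul_right_injective₀ hl).injOn, sum_congr rfl hmul, ← mul_sum,
      ← coe_mul_zeta_apply, moebius_mul_coe_zeta, ArithmeticFunction.one_apply]
    simp [hl]
  · rw [filter_false_of_mem fun d hd hld ↦ hlh (hld.trans (Nat.dvd_of_mem_divisors hd)),
      if_neg fun h ↦ hlh (dvd_of_eq h.symm), sum_empty]

/-- Selberg's weight `λ_d` for a sieve `s`, where `D` is the set of moduli in its support (the
divisors of the sieving primes up to the level, in the classical setting). -/
noncomputable def selbergWeight (s : BoundingSieve) (D : Finset ℕ) (d : ℕ) : ℝ :=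
  μ d * (∑ h ∈ D with d ∣ h, s.selbergTerms h) / (s.nu d * ∑ h ∈ D, s.selbergTerms h)

variable {s : BoundingSieve} {D : Finset ℕ}

lemma nu_le_selbergTerms {d : ℕ} (hd : d ∣ s.prodPrimes) : s.nu d ≤ s.selbergTerms d := by
  rw [selbergTerms_apply]
  refine le_mul_of_one_le_right (nu_pos_of_dvd_prodPrimes hd).le (one_le_prod fun p hp ↦ ?_)
  have hp' := Nat.prime_of_mem_primeFactors hp
  have hpP := (Nat.dvd_of_mem_primeFactors hp).trans hd
  exact (one_le_inv₀ (sub_pos.2 (s.nu_lt_one_of_prime p hp' hpP))).2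
    (sub_le_self 1 (s.nu_pos_of_prime p hp' hpP).le)

lemma sum_selbergTerms_pos (hD : D ⊆ s.prodPrimes.divisors) (hne : D.Nonempty) :
    0 < ∑ d ∈ D, s.selbergTerms d :=
  sum_pos (fun _ hd ↦ selbergTerms_pos (Nat.dvd_of_mem_divisors (hD hd))) hne

lemma selbergWeight_one (hD : D ⊆ s.prodPrimes.divisors) (hne : D.Nonempty) :
    selbergWeight s D 1 = 1 := by
  simp [selbergWeight, s.nu_mult.map_one, (sum_selbergTerms_pos hD hne).ne']

lemma selbergWeight_eq_zero_of_notMem (hclosed : ∀ d ∈ D, ∀ e, e ∣ d → e ∈ D) {d : ℕ}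
    (hd : d ∉ D) : selbergWeight s D d = 0 := by
  rw [selbergWeight, filter_false_of_mem fun h hh hdh ↦ hd (hclosed h hh d hdh)]
  simp

lemma selbergTerms_mul_sum_filter_dvd_le (hD : D ⊆ s.prodPrimes.divisors)
    (hclosed : ∀ d ∈ D, ∀ e, e ∣ d → e ∈ D) {d k : ℕ} (hd : d ∣ s.prodPrimes) (hk : k ∣ d) :
    s.selbergTerms k * ∑ h ∈ D with d ∣ h, s.selbergTerms h ≤
      s.selbergTerms d * ∑ h ∈ D with h.gcd d = k, s.selbergTerms h := by
  have hd0 : 0 < d := Nat.pos_of_dvd_of_pos hd prodPrimes_ne_zero.pos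
  have hcop {e : ℕ} (he : d * e ∈ D) : d.Coprime e := Nat.coprime_of_squarefree_mul <|
    squarefree_of_dvd_prodPrimes <| Nat.dvd_of_mem_divisors <| hD he
  have hmaps : ∀ h ∈ {h ∈ D | d ∣ h}, k * (h / d) ∈ {h ∈ D | h.gcd d = k} := fun h hh ↦ by
    obtain ⟨hhD, e, rfl⟩ := mem_filter.1 hh
    rw [Nat.mul_div_cancel_left e hd0]
    exact mem_filter.2 ⟨hclosed _ hhD _ (mul_dvd_mul_right hk e), by
      rw [Nat.Coprime.gcd_mul_right_cancel k (hcop hhD).symm, Nat.gcd_eq_left hk]⟩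
  have hinj : Set.InjOn (fun h ↦ k * (h / d)) ({h ∈ D | d ∣ h} : Finset ℕ) :=
    fun h hh h' hh' heq ↦ (Nat.div_left_inj (mem_filter.1 hh).2 (mem_filter.1 hh').2).1
      (Nat.eq_of_mul_eq_mul_left (Nat.pos_of_dvd_of_pos hk hd0) heq)
  have hterm : ∀ h ∈ {h ∈ D | d ∣ h}, s.selbergTerms k * s.selbergTerms h =
      s.selbergTerms d * s.selbergTerms (k * (h / d)) := fun h hh ↦ by
    obtain ⟨hhD, e, rfl⟩ := mem_filter.1 hh
    rw [Nat.mul_div_cancel_left e hd0, selbergTerms_isMultiplicative.map_mul_of_coprime (hcop hhD),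
      selbergTerms_isMultiplicative.map_mul_of_coprime ((hcop hhD).coprime_dvd_left hk)]
    ring
  rw [mul_sum, sum_congr rfl hterm, ← mul_sum]
  refine mul_le_mul_of_nonneg_left ?_ (selbergTerms_pos hd).le
  rw [← sum_image (f := s.selbergTerms) hinj]
  exact sum_le_sum_of_subset_of_nonneg (image_subset_iff.2 hmaps) fun h hh _ ↦
    (selbergTerms_pos (Nat.dvd_of_mem_divisors (hD (mem_filter.1 hh).1))).le

lemma sum_filter_dvd_selbergTerms_le (hD : D ⊆ s.prodPrimes.divisors)
    (hclosed : ∀ d ∈ D, ∀ e, e ∣ d → e ∈ D) {d : ℕ} (hd : d ∣ s.prodPrimes) :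
    ∑ h ∈ D with d ∣ h, s.selbergTerms h ≤ s.nu d * ∑ h ∈ D, s.selbergTerms h := by
  have hν := nu_pos_of_dvd_prodPrimes hd
  have hg := selbergTerms_pos hd
  have hd0 : d ≠ 0 := (Nat.pos_of_dvd_of_pos hd prodPrimes_ne_zero.pos).ne'
  have hdiv : ∑ k ∈ d.divisors, s.selbergTerms k = s.selbergTerms d * (s.nu d)⁻¹ := by
    rw [← sum_divisors_selbergTerms_eq_selbergTerms_mul_nu_inv hd, ← sum_filter,
      Nat.divisors_filter_dvd_of_dvd prodPrimes_ne_zero hd]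
  have hgcd : ∀ h ∈ D, h.gcd d ∈ d.divisors := fun h _ ↦
    Nat.mem_divisors.2 ⟨Nat.gcd_dvd_right h d, hd0⟩
  have hsum := sum_le_sum fun k (hk : k ∈ d.divisors) ↦
    selbergTerms_mul_sum_filter_dvd_le hD hclosed hd (Nat.dvd_of_mem_divisors hk)
  rw [← sum_mul, ← mul_sum, hdiv, sum_fiberwise_of_maps_to hgcd, mul_assoc] at hsum
  exact (inv_mul_le_iff₀ hν).1 (le_of_mul_le_mul_left hsum hg)

lemma abs_selbergWeight_le_one (hD : D ⊆ s.prodPrimes.divisors)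
    (hclosed : ∀ d ∈ D, ∀ e, e ∣ d → e ∈ D) (d : ℕ) :
    |selbergWeight s D d| ≤ 1 := by
  by_cases hd : d ∈ D
  · have hdP := Nat.dvd_of_mem_divisors (hD hd)
    have hpos := mul_pos (nu_pos_of_dvd_prodPrimes hdP) (sum_selbergTerms_pos hD ⟨d, hd⟩)
    have hnonneg : 0 ≤ ∑ h ∈ D with d ∣ h, s.selbergTerms h := sum_nonneg fun h hh ↦
      (selbergTerms_pos (Nat.dvd_of_mem_divisors (hD (mem_filter.1 hh).1))).le
    have hμ : |(μ d : ℝ)| ≤ 1 := mod_cast abs_moebius_le_one (n := d)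
    rw [selbergWeight, abs_div, abs_mul, abs_of_pos hpos, abs_of_nonneg hnonneg, div_le_one hpos]
    exact (mul_le_of_le_one_left hnonneg hμ).trans (sum_filter_dvd_selbergTerms_le hD hclosed hdP)
  · simp [selbergWeight_eq_zero_of_notMem hclosed hd]

lemma sum_nu_mul_selbergWeight (hD : D ⊆ s.prodPrimes.divisors) (l : ℕ) :
    (∑ d ∈ s.prodPrimes.divisors, if l ∣ d then s.nu d * selbergWeight s D d else 0) =
      if l ∈ D then μ l * s.selbergTerms l / ∑ h ∈ D, s.selbergTerms h else 0 := by
  set G := ∑ h ∈ D, s.selbergTerms h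
  have hterm : ∀ d ∈ {d ∈ s.prodPrimes.divisors | l ∣ d}, s.nu d * selbergWeight s D d =
      (∑ h ∈ D with d ∣ h, (μ d : ℝ) * s.selbergTerms h) / G := fun d hd ↦ by
    have hν := nu_ne_zero (Nat.dvd_of_mem_divisors (mem_filter.1 hd).1)
    rw [selbergWeight, ← mul_div_assoc, mul_div_mul_left _ _ hν, mul_sum]
  have hswap : ∀ d h, d ∈ {d ∈ s.prodPrimes.divisors | l ∣ d} ∧ h ∈ {h ∈ D | d ∣ h} ↔
      d ∈ {d ∈ h.divisors | l ∣ d} ∧ h ∈ D := fun d h ↦ by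
    by_cases hh : h ∈ D
    · have hhP := Nat.dvd_of_mem_divisors (hD hh)
      have hh0 := ne_zero_of_dvd_ne_zero prodPrimes_ne_zero hhP
      have hP0 := s.prodPrimes_ne_zero
      simp only [mem_filter, Nat.mem_divisors]
      grind [dvd_trans]
    · simp [hh]
  have hmoebius : ∀ h ∈ D, ∑ d ∈ h.divisors with l ∣ d, (μ d : ℝ) * s.selbergTerms h =
      if h = l then μ l * s.selbergTerms l else 0 := fun h hh ↦ by
    have hsq := squarefree_of_dvd_prodPrimes (Nat.dvd_of_mem_divisors (hD hh))
    rw [← sum_mul, ← Int.cast_sum, sum_divisors_filter_dvd_moebius hsq]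
    split_ifs with hl <;> simp [hl]
  rw [← sum_filter, sum_congr rfl hterm, ← sum_div, sum_comm' hswap, sum_congr rfl hmoebius,
    sum_ite_eq', ite_div, zero_div]

lemma mainSum_lambdaSquared_selbergWeight (hD : D ⊆ s.prodPrimes.divisors) :
    s.mainSum (lambdaSquared (selbergWeight s D)) = (∑ d ∈ D, s.selbergTerms d)⁻¹ := by
  set G := ∑ d ∈ D, s.selbergTerms d with hG
  have hterm : ∀ l ∈ D, (s.selbergTerms l)⁻¹ * (μ l * s.selbergTerms l / G) ^ 2 =
      s.selbergTerms l / G ^ 2 := fun l hl ↦ by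
    have hlP := Nat.dvd_of_mem_divisors (hD hl)
    have hg := (selbergTerms_pos hlP).ne'
    have hμ : (μ l : ℝ) ^ 2 = 1 :=
      mod_cast moebius_sq_eq_one_of_squarefree (squarefree_of_dvd_prodPrimes hlP)
    rw [div_pow, mul_pow, hμ]
    field_simp
  rw [mainSum_lambdaSquared_eq_sum_mul_sum_sq]
  simp only [sum_nu_mul_selbergWeight hD, ite_pow, mul_ite, ← hG, zero_pow two_ne_zero, mul_zero]
  rw [← sum_filter, filter_mem_eq_inter, inter_eq_right.2 hD, sum_congr rfl hterm, ← sum_div, ← hG,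
    sq, div_self_mul_self']

lemma errSum_lambdaSquared_le (w : ℕ → ℝ) :
    s.errSum (lambdaSquared w) ≤ ∑ d₁ ∈ s.prodPrimes.divisors, ∑ d₂ ∈ s.prodPrimes.divisors,
      |w d₁| * |w d₂| * |s.rem (d₁.lcm d₂)| := by
  set P := s.prodPrimes.divisors
  have hterm : ∀ d ∈ P, |lambdaSquared w d| * |s.rem d| ≤
      ∑ d₁ ∈ P, ∑ d₂ ∈ P, if d₁.lcm d₂ = d then |w d₁| * |w d₂| * |s.rem d| else 0 := fun d hd ↦ by
    have hsub : d.divisors ⊆ P :=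
      Nat.divisors_subset_of_dvd prodPrimes_ne_zero (Nat.dvd_of_mem_divisors hd)
    calc |lambdaSquared w d| * |s.rem d|
        ≤ (∑ d₁ ∈ d.divisors, ∑ d₂ ∈ d.divisors,
            if d = d₁.lcm d₂ then |w d₁| * |w d₂| else 0) * |s.rem d| := by
          refine mul_le_mul_of_nonneg_right ((abs_sum_le_sum_abs _ _).trans <| sum_le_sum
            fun d₁ _ ↦ (abs_sum_le_sum_abs _ _).trans_eq <| sum_congr rfl fun d₂ _ ↦ ?_)
            (abs_nonneg _)
          split_ifs <;> simp [abs_mul]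
      _ ≤ (∑ d₁ ∈ P, ∑ d₂ ∈ P,
            if d = d₁.lcm d₂ then |w d₁| * |w d₂| else 0) * |s.rem d| := by
          refine mul_le_mul_of_nonneg_right ?_ (abs_nonneg _)
          rw [← sum_product', ← sum_product']
          exact sum_le_sum_of_subset_of_nonneg (product_subset_product hsub hsub) fun _ _ _ ↦ by
            positivity
      _ = _ := by simp only [sum_mul, ite_mul, zero_mul, eq_comm]
  calc s.errSum (lambdaSquared w)
      ≤ ∑ d ∈ P, ∑ d₁ ∈ P, ∑ d₂ ∈ P,
          if d₁.lcm d₂ = d then |w d₁| * |w d₂| * |s.rem d| else 0 := sum_le_sum hterm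
    _ = ∑ d₁ ∈ P, ∑ d₂ ∈ P, ∑ d ∈ P,
          if d₁.lcm d₂ = d then |w d₁| * |w d₂| * |s.rem d| else 0 := by
        rw [sum_comm]
        exact sum_congr rfl fun d₁ _ ↦ sum_comm
    _ = _ := sum_congr rfl fun d₁ h₁ ↦ sum_congr rfl fun d₂ h₂ ↦ by
        rw [sum_ite_eq, if_pos]
        exact Nat.mem_divisors.2 ⟨Nat.lcm_dvd (Nat.dvd_of_mem_divisors h₁)
          (Nat.dvd_of_mem_divisors h₂), prodPrimes_ne_zero⟩

theorem siftedSum_le_div_sum_selbergTerms_add (hD : D ⊆ s.prodPrimes.divisors)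
    (hne : D.Nonempty) (hclosed : ∀ d ∈ D, ∀ e, e ∣ d → e ∈ D) :
    s.siftedSum ≤ s.totalMass / ∑ d ∈ D, s.selbergTerms d +
      ∑ d₁ ∈ D, ∑ d₂ ∈ D, |s.rem (d₁.lcm d₂)| := by
  set w := selbergWeight s D
  have hw : ∀ d, |w d| ≤ 1 := abs_selbergWeight_le_one hD hclosed
  have hzero : ∀ d ∉ D, |w d| = 0 := fun d hd ↦ by
    rw [abs_eq_zero]
    exact selbergWeight_eq_zero_of_notMem hclosed hd
  have herr : s.errSum (lambdaSquared w) ≤ ∑ d₁ ∈ D, ∑ d₂ ∈ D, |s.rem (d₁.lcm d₂)| :=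
    calc s.errSum (lambdaSquared w)
        ≤ ∑ d₁ ∈ s.prodPrimes.divisors, ∑ d₂ ∈ s.prodPrimes.divisors,
            |w d₁| * |w d₂| * |s.rem (d₁.lcm d₂)| := errSum_lambdaSquared_le w
      _ = ∑ d₁ ∈ D, ∑ d₂ ∈ D, |w d₁| * |w d₂| * |s.rem (d₁.lcm d₂)| := by
          rw [← sum_subset hD fun d _ hd ↦ by simp [hzero d hd]]
          exact sum_congr rfl fun d₁ _ ↦ (sum_subset hD fun d _ hd ↦ by simp [hzero d hd]).symm
      _ ≤ _ := sum_le_sum fun d₁ _ ↦ sum_le_sum fun d₂ _ ↦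
          mul_le_of_le_one_left (abs_nonneg _) (mul_le_one₀ (hw d₁) (abs_nonneg _) (hw d₂))
  have hmain := siftedSum_le_mainSum_errSum_of_upperMoebius (s := s) _
    (upperMoebius_lambdaSquared w (selbergWeight_one hD hne))
  rw [mainSum_lambdaSquared_selbergWeight hD, ← div_eq_mul_inv] at hmain
  exact hmain.trans (add_le_add_right herr _)

end SelbergSieve

section PrimesInProgressions

open ArithmeticFunction BoundingSieve
open scoped ArithmeticFunction.zeta

lemma abs_card_filter_modEq_sub_div_le_one {r : ℕ} (hr : 0 < r) (v x y : ℕ) :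
    |(#{n ∈ Ico x (x + y) | n ≡ v [MOD r]} : ℝ) - y / r| ≤ 1 := by
  set N := #{n ∈ Ico x (x + y) | n ≡ v [MOD r]} with hN
  have hcard := Nat.Ico_filter_modEq_card x (x + y) hr v
  have hlen : ((x + y : ℕ) - v : ℚ) / r = (x - v : ℚ) / r + y / r := by push_cast; ring
  have hy : (0 : ℚ) ≤ y / r := by positivity
  rw [hlen, max_eq_left (sub_nonneg.2 (Int.ceil_mono (by linarith))), ← hN] at hcard
  have hcard' : (N : ℚ) = ⌈(x - v : ℚ) / r + y / r⌉ - ⌈(x - v : ℚ) / r⌉ := mod_cast hcard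
  have habs : |(N : ℚ) - y / r| ≤ 1 := by
    rw [hcard', abs_le]
    constructor <;> linarith [Int.le_ceil ((x - v : ℚ) / r + y / r), Int.le_ceil ((x - v : ℚ) / r),
      Int.ceil_lt_add_one ((x - v : ℚ) / r + y / r), Int.ceil_lt_add_one ((x - v : ℚ) / r)]
  simpa using (Rat.cast_le (K := ℝ)).2 habs

/-- The sieve of the `n ≡ c [MOD q]` in `[x, x + y)` by the primes up to `z` not dividing `q`,
with local densities `ν d = 1 / d`. -/
noncomputable def progressionSieve (q c x y z : ℕ) : BoundingSieve where
  support := {n ∈ Ico x (x + y) | n ≡ c [MOD q]}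
  prodPrimes := ∏ p ∈ Icc 1 z with p.Prime ∧ p.Coprime q, p
  prodPrimes_squarefree := squarefree_prod_of_pairwise_isCoprime
    (fun p hp p' hp' hne ↦ Nat.coprime_iff_isRelPrime.1 <|
      (Nat.coprime_primes (mem_filter.1 hp).2.1 (mem_filter.1 hp').2.1).2 hne)
    fun p hp ↦ (mem_filter.1 hp).2.1.prime.squarefree
  weights _ := 1
  weights_nonneg _ := zero_le_one
  totalMass := y / q
  nu := pdiv ζ (ArithmeticFunction.id : ArithmeticFunction ℕ)
  nu_mult := isMultiplicative_zeta.natCast.pdiv isMultiplicative_id.natCast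
  nu_pos_of_prime p hp _ := by simp [hp.ne_zero, hp.pos]
  nu_lt_one_of_prime p hp _ := by
    simpa [hp.ne_zero] using inv_lt_one_of_one_lt₀ (mod_cast hp.one_lt)

/-- The squarefree moduli up to `z` coprime to `q`: Selberg's weight for `progressionSieve` is
supported on them. -/
def squarefreeCoprime (q z : ℕ) : Finset ℕ :=
  {d ∈ Icc 1 z | Squarefree d ∧ d.Coprime q}

variable {q z : ℕ}

lemma mem_squarefreeCoprime {d : ℕ} :
    d ∈ squarefreeCoprime q z ↔ (1 ≤ d ∧ d ≤ z) ∧ Squarefree d ∧ d.Coprime q := by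
  simp only [squarefreeCoprime, mem_filter, mem_Icc]

lemma progressionSieve_nu_apply (c x y : ℕ) {d : ℕ} (hd : d ≠ 0) :
    (progressionSieve q c x y z).nu d = (d : ℝ)⁻¹ := by
  simp [progressionSieve, hd]

lemma squarefreeCoprime_subset_divisors (c x y : ℕ) :
    squarefreeCoprime q z ⊆ (progressionSieve q c x y z).prodPrimes.divisors := fun d hd ↦ by
  obtain ⟨⟨hd1, hdz⟩, hsq, hcop⟩ := mem_squarefreeCoprime.1 hd
  refine Nat.mem_divisors.2 ⟨?_, prodPrimes_ne_zero⟩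
  change d ∣ ∏ p ∈ Icc 1 z with p.Prime ∧ p.Coprime q, p
  rw [← Nat.prod_primeFactors_of_squarefree hsq]
  refine prod_dvd_prod_of_subset _ _ _ fun p hp ↦ mem_filter.2 ?_
  have hpd := Nat.dvd_of_mem_primeFactors hp
  have hpp := Nat.prime_of_mem_primeFactors hp
  exact ⟨mem_Icc.2 ⟨hpp.one_le, (Nat.le_of_dvd hd1 hpd).trans hdz⟩, hpp, hcop.coprime_dvd_left hpd⟩

lemma mem_squarefreeCoprime_of_dvd {d e : ℕ} (hd : d ∈ squarefreeCoprime q z) (hed : e ∣ d) :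
    e ∈ squarefreeCoprime q z := by
  obtain ⟨⟨hd1, hdz⟩, hsq, hcop⟩ := mem_squarefreeCoprime.1 hd
  exact mem_squarefreeCoprime.2 ⟨⟨Nat.pos_of_dvd_of_pos hed hd1, (Nat.le_of_dvd hd1 hed).trans hdz⟩,
    hsq.squarefree_of_dvd hed, hcop.coprime_dvd_left hed⟩

lemma abs_progressionSieve_rem_le_one (hq : 0 < q) (c x y : ℕ) {d : ℕ} (hd : 0 < d)
    (hcop : d.Coprime q) : |(progressionSieve q c x y z).rem d| ≤ 1 := by
  obtain ⟨v, hvq, hvd⟩ := Nat.chineseRemainder hcop.symm c 0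
  have hfilter : {n ∈ Ico x (x + y) | n ≡ c [MOD q] ∧ d ∣ n} =
      {n ∈ Ico x (x + y) | n ≡ v [MOD q * d]} := filter_congr fun n _ ↦ by
    rw [← Nat.modEq_and_modEq_iff_modEq_mul hcop.symm, ← Nat.modEq_zero_iff_dvd]
    exact and_congr ⟨(·.trans hvq.symm), (·.trans hvq)⟩ ⟨(·.trans hvd.symm), (·.trans hvd)⟩
  have hmult : (progressionSieve q c x y z).multSum d =
      #{n ∈ Ico x (x + y) | n ≡ v [MOD q * d]} := by
    rw [← hfilter, ← filter_filter, card_filter, Nat.cast_sum]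
    simp [multSum, progressionSieve]
  rw [rem, hmult, progressionSieve_nu_apply c x y hd.ne']
  convert abs_card_filter_modEq_sub_div_le_one (mul_pos hq hd) v x y using 3
  simp only [progressionSieve, Nat.cast_mul]
  field_simp

lemma card_primes_le_progressionSieve_siftedSum (c y : ℕ) {x : ℕ} (hzx : z < x) :
    (#{p ∈ Ico x (x + y) | p.Prime ∧ p ≡ c [MOD q]} : ℝ) ≤
      (progressionSieve q c x y z).siftedSum := by
  have hcop : ∀ p ∈ Ico x (x + y), p.Prime →
      (progressionSieve q c x y z).prodPrimes.Coprime p := fun p hp hpp ↦ by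
    change (∏ p ∈ Icc 1 z with p.Prime ∧ p.Coprime q, p).Coprime p
    refine Nat.Coprime.prod_left fun p' hp' ↦ ?_
    obtain ⟨hp'z, hpp', -⟩ := mem_filter.1 hp'
    exact (Nat.coprime_primes hpp' hpp).2
      (((mem_Icc.1 hp'z).2.trans_lt hzx).trans_le (mem_Ico.1 hp).1).ne
  have hsifted : (progressionSieve q c x y z).siftedSum = #{n ∈ Ico x (x + y) | n ≡ c [MOD q] ∧
      (progressionSieve q c x y z).prodPrimes.Coprime n} := by
    rw [← filter_filter, card_filter, Nat.cast_sum]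
    simp only [Nat.cast_ite, Nat.cast_one, Nat.cast_zero]
    rfl
  rw [hsifted, Nat.cast_le]
  exact card_le_card fun p hp ↦ by grind

theorem card_primes_modEq_le (hq : 0 < q) (c y : ℕ) {x : ℕ} (hz : 0 < z) (hzx : z < x) :
    (#{p ∈ Ico x (x + y) | p.Prime ∧ p ≡ c [MOD q]} : ℝ) ≤
      y / q / ∑ d ∈ squarefreeCoprime q z, (d : ℝ)⁻¹ + z ^ 2 := by
  set s := progressionSieve q c x y z
  set D := squarefreeCoprime q z
  have hD : D ⊆ s.prodPrimes.divisors := squarefreeCoprime_subset_divisors c x y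
  have hone : 1 ∈ D := mem_squarefreeCoprime.2 ⟨⟨le_rfl, hz⟩, squarefree_one, q.coprime_one_left⟩
  have hsum_pos : 0 < ∑ d ∈ D, (d : ℝ)⁻¹ := sum_pos
    (fun d hd ↦ inv_pos.2 (mod_cast (mem_squarefreeCoprime.1 hd).1.1)) ⟨1, hone⟩
  have hsum_le : ∑ d ∈ D, (d : ℝ)⁻¹ ≤ ∑ d ∈ D, s.selbergTerms d := sum_le_sum fun d hd ↦ by
    rw [← progressionSieve_nu_apply c x y (Nat.pos_iff_ne_zero.1 (mem_squarefreeCoprime.1 hd).1.1)]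
    exact nu_le_selbergTerms (Nat.dvd_of_mem_divisors (hD hd))
  have hrem : ∑ d₁ ∈ D, ∑ d₂ ∈ D, |s.rem (d₁.lcm d₂)| ≤ (z : ℝ) ^ 2 := by
    have hcard : (#D : ℝ) ≤ z := mod_cast (card_filter_le _ _).trans_eq (by simp)
    calc ∑ d₁ ∈ D, ∑ d₂ ∈ D, |s.rem (d₁.lcm d₂)| ≤ ∑ _ ∈ D, ∑ _ ∈ D, (1 : ℝ) :=
          sum_le_sum fun d₁ h₁ ↦ sum_le_sum fun d₂ h₂ ↦ by
            obtain ⟨⟨h₁0, -⟩, -, h₁q⟩ := mem_squarefreeCoprime.1 h₁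
            obtain ⟨⟨h₂0, -⟩, -, h₂q⟩ := mem_squarefreeCoprime.1 h₂
            exact abs_progressionSieve_rem_le_one hq c x y (Nat.lcm_pos h₁0 h₂0)
              ((h₁q.mul_left h₂q).coprime_dvd_left (Nat.lcm_dvd_mul d₁ d₂))
      _ = (#D : ℝ) ^ 2 := by simp [sq]
      _ ≤ (z : ℝ) ^ 2 := by gcongr
  calc (#{p ∈ Ico x (x + y) | p.Prime ∧ p ≡ c [MOD q]} : ℝ)
      ≤ s.siftedSum := card_primes_le_progressionSieve_siftedSum c y hzx
    _ ≤ s.totalMass / ∑ d ∈ D, s.selbergTerms d + ∑ d₁ ∈ D, ∑ d₂ ∈ D, |s.rem (d₁.lcm d₂)| :=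
        siftedSum_le_div_sum_selbergTerms_add hD ⟨1, hone⟩
          fun d hd e hed ↦ mem_squarefreeCoprime_of_dvd hd hed
    _ ≤ y / q / ∑ d ∈ D, (d : ℝ)⁻¹ + z ^ 2 := by
        have hmass : s.totalMass = (y : ℝ) / q := rfl
        rw [hmass]
        gcongr

lemma exists_eq_sq_mul_mul {n : ℕ} (hq : q ≠ 0) (hn : n ∈ Ioo 0 (z + 1)) :
    ∃ b ∈ Ioo 0 (z + 1), ∃ k ∈ q.divisors, ∃ a ∈ squarefreeCoprime q z, b ^ 2 * (k * a) = n := by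
  obtain ⟨hn0, hnz⟩ := mem_Ioo.1 hn
  obtain ⟨m, b, rfl, hm⟩ := Nat.sq_mul_squarefree n
  obtain ⟨a, ha⟩ := m.gcd_dvd_left q
  have hb : b ∣ b ^ 2 * m := (dvd_pow_self b two_ne_zero).mul_right m
  have ham : a ∣ m := Dvd.intro_left _ ha.symm
  have haz : a ∣ b ^ 2 * m := ham.mul_left _
  have hka : (m.gcd q).Coprime a := Nat.coprime_of_squarefree_mul (ha ▸ hm)
  have haq : a.Coprime q := Nat.eq_one_of_dvd_one <| hka ▸ Nat.dvd_gcd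
    (Nat.dvd_gcd ((a.gcd_dvd_left q).trans ham) (a.gcd_dvd_right q)) (a.gcd_dvd_left q)
  exact ⟨b, mem_Ioo.2 ⟨Nat.pos_of_dvd_of_pos hb hn0, (Nat.le_of_dvd hn0 hb).trans_lt hnz⟩,
    m.gcd q, Nat.mem_divisors.2 ⟨m.gcd_dvd_right q, hq⟩, a, mem_squarefreeCoprime.2
      ⟨⟨Nat.pos_of_dvd_of_pos haz hn0, Nat.lt_succ_iff.1 ((Nat.le_of_dvd hn0 haz).trans_lt hnz)⟩,
        hm.squarefree_of_dvd ham, haq⟩, by rw [← ha]⟩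

lemma log_add_one_le_sum_squarefreeCoprime (hq : q ≠ 0) (z : ℕ) :
    Real.log (z + 1) ≤
      2 * (∑ k ∈ q.divisors, (k : ℝ)⁻¹) * ∑ a ∈ squarefreeCoprime q z, (a : ℝ)⁻¹ := by
  set T := Ioo 0 (z + 1) ×ˢ q.divisors ×ˢ squarefreeCoprime q z
  let f : ℕ × ℕ × ℕ → ℕ := fun t ↦ t.1 ^ 2 * (t.2.1 * t.2.2)
  have hcover : Ioo 0 (z + 1) ⊆ T.image f := fun n hn ↦ by
    obtain ⟨b, hb, k, hk, a, ha, h⟩ := exists_eq_sq_mul_mul hq hn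
    exact mem_image.2 ⟨(b, k, a), mem_product.2 ⟨hb, mem_product.2 ⟨hk, ha⟩⟩, h⟩
  have hsquares : ∑ b ∈ Ioo 0 (z + 1), ((b : ℝ) ^ 2)⁻¹ ≤ 2 := by
    simpa using sum_Ioo_inv_sq_le (α := ℝ) 0 (z + 1)
  calc Real.log (z + 1) ≤ (harmonic z : ℝ) := mod_cast log_add_one_le_harmonic z
    _ = ∑ n ∈ Ioo 0 (z + 1), (n : ℝ)⁻¹ := by
        rw [harmonic_eq_sum_Icc]
        push_cast
        rfl
    _ ≤ ∑ n ∈ T.image f, (n : ℝ)⁻¹ :=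
        sum_le_sum_of_subset_of_nonneg hcover fun _ _ _ ↦ by positivity
    _ ≤ ∑ t ∈ T, (f t : ℝ)⁻¹ := sum_image_le_of_nonneg fun _ _ ↦ by positivity
    _ = (∑ b ∈ Ioo 0 (z + 1), ((b : ℝ) ^ 2)⁻¹) *
          ((∑ k ∈ q.divisors, (k : ℝ)⁻¹) * ∑ a ∈ squarefreeCoprime q z, (a : ℝ)⁻¹) := by
        rw [sum_mul_sum, ← sum_product', sum_mul_sum, ← sum_product']
        exact sum_congr rfl fun _ _ ↦ by simp only [f, Nat.cast_mul, Nat.cast_pow, mul_inv]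
    _ ≤ 2 * (∑ k ∈ q.divisors, (k : ℝ)⁻¹) * ∑ a ∈ squarefreeCoprime q z, (a : ℝ)⁻¹ := by
        rw [mul_assoc]
        gcongr

/-- The Brun–Titchmarsh inequality, with `σ(q) / q` in place of `q / φ(q)`. -/
theorem card_primes_modEq_le_div_log (hq : 0 < q) (c y : ℕ) {x : ℕ} (hz : 0 < z) (hzx : z < x) :
    (#{p ∈ Ico x (x + y) | p.Prime ∧ p ≡ c [MOD q]} : ℝ) ≤
      2 * (∑ k ∈ q.divisors, (k : ℝ)⁻¹) * (y / q) / Real.log (z + 1) + z ^ 2 := by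
  refine (card_primes_modEq_le hq c y hz hzx).trans (add_le_add_left ?_ _)
  have hlog : 0 < Real.log (z + 1) := Real.log_pos (by norm_cast; omega)
  have hle := log_add_one_le_sum_squarefreeCoprime hq.ne' z
  have hpos : 0 < ∑ a ∈ squarefreeCoprime q z, (a : ℝ)⁻¹ :=
    pos_of_mul_pos_right (hlog.trans_le hle) (by positivity)
  rw [div_le_div_iff₀ hpos hlog]
  calc (y : ℝ) / q * Real.log (z + 1) ≤ y / q * (2 * (∑ k ∈ q.divisors, (k : ℝ)⁻¹) *
        ∑ a ∈ squarefreeCoprime q z, (a : ℝ)⁻¹) := by gcongr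
    _ = _ := by ring

lemma one_le_sum_inv_divisors (hq : q ≠ 0) : 1 ≤ ∑ k ∈ q.divisors, (k : ℝ)⁻¹ := by
  simpa using single_le_sum (f := fun k : ℕ ↦ (k : ℝ)⁻¹) (fun _ _ ↦ by positivity)
    (Nat.one_mem_divisors.2 hq)

lemma two_pow_div_four_succ_sq_le (i : ℕ) :
    ((2 : ℝ) ^ (i / 4 + 1)) ^ 2 ≤ 16 * 2 ^ i / (i + 1) := by
  set j := i / 4
  have hi : i + 1 ≤ 4 * 2 ^ j := by have := j.lt_two_pow_self; omega
  have hj : (2 ^ j) ^ 3 ≤ 2 ^ i := by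
    rw [← pow_mul]
    exact Nat.pow_le_pow_right two_pos (by omega)
  have : (2 ^ (j + 1)) ^ 2 * (i + 1) ≤ 16 * 2 ^ i :=
    calc (2 ^ (j + 1)) ^ 2 * (i + 1) ≤ (2 ^ (j + 1)) ^ 2 * (4 * 2 ^ j) := by gcongr
      _ = 16 * (2 ^ j) ^ 3 := by ring
      _ ≤ 16 * 2 ^ i := by gcongr
  rw [le_div_iff₀ (by positivity)]
  exact_mod_cast this

lemma card_primes_modEq_dyadic_le (hq : 1 < q) (c i : ℕ) :
    (#{p ∈ Ico (2 ^ i * q) (2 ^ (i + 1) * q) | p.Prime ∧ p ≡ c [MOD q]} : ℝ) ≤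
      32 * (∑ k ∈ q.divisors, (k : ℝ)⁻¹) * 2 ^ i / (i + 1) := by
  set S := ∑ k ∈ q.divisors, (k : ℝ)⁻¹
  have hS : 1 ≤ S := one_le_sum_inv_divisors (by omega)
  -- Sieving up to `z ≈ 2 ^ (i / 4)` keeps the error term `z ^ 2` below the main term.
  set j := i / 4
  obtain ⟨z, hz⟩ : ∃ z, z + 1 = 2 ^ (j + 1) := ⟨_, Nat.sub_add_cancel Nat.one_le_two_pow⟩
  have hz' : (z : ℝ) + 1 = 2 ^ (j + 1) := mod_cast hz
  have hz0 : 0 < z := by have := Nat.one_lt_two_pow j.succ_ne_zero; omega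
  have hzx : z < 2 ^ i * q := by
    calc z < 2 ^ (j + 1) := by omega
      _ ≤ 2 ^ (i + 1) := Nat.pow_le_pow_right two_pos (by omega)
      _ ≤ 2 ^ i * q := Nat.mul_le_mul_left _ hq
  have hbt := card_primes_modEq_le_div_log (zero_lt_one.trans hq) c (2 ^ i * q) hz0 hzx
  rw [← two_mul, ← mul_assoc, ← pow_succ'] at hbt
  have hij : ((i : ℝ) + 1) / 4 ≤ j + 1 := by
    have : i + 1 ≤ 4 * (j + 1) := by omega
    rify at this
    linarith
  have hlog : ((i : ℝ) + 1) / 8 ≤ Real.log (z + 1) := by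
    rw [hz', Real.log_pow]
    push_cast
    nlinarith [Real.log_two_gt_d9]
  have hmain : 2 * S * ((2 ^ i * q : ℕ) / q) / Real.log (z + 1) ≤ 16 * S * 2 ^ i / (i + 1) := by
    have hq0 : (q : ℝ) ≠ 0 := by positivity
    calc 2 * S * ((2 ^ i * q : ℕ) / q) / Real.log (z + 1)
        ≤ 2 * S * ((2 ^ i * q : ℕ) / q) / (((i : ℝ) + 1) / 8) := by gcongr
      _ = 16 * S * 2 ^ i / (i + 1) := by push_cast; field_simp; norm_num
  have herr : (z : ℝ) ^ 2 ≤ 16 * 2 ^ i / (i + 1) :=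
    (by gcongr; linarith : (z : ℝ) ^ 2 ≤ (2 ^ (j + 1)) ^ 2).trans (two_pow_div_four_succ_sq_le i)
  have herr_le : 16 * 2 ^ i / ((i : ℝ) + 1) ≤ 16 * S * 2 ^ i / (i + 1) := by
    gcongr
    linarith
  refine (hbt.trans (add_le_add hmain (herr.trans herr_le))).trans_eq ?_
  ring

theorem sum_inv_primes_modEq_le (hq : 1 < q) (c X : ℕ) :
    ∑ p ∈ Icc q X with p.Prime ∧ p ≡ c [MOD q], (p : ℝ)⁻¹ ≤
      32 * (∑ k ∈ q.divisors, (k : ℝ)⁻¹) / q * (1 + Real.log (Nat.log 2 X + 1)) := by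
  set S := ∑ k ∈ q.divisors, (k : ℝ)⁻¹
  set P := {p ∈ Icc q X | p.Prime ∧ p ≡ c [MOD q]}
  have hq0 : 0 < q := zero_lt_one.trans hq
  have hqX : ∀ p ∈ P, q ≤ p ∧ p ≤ X := fun p hp ↦ mem_Icc.1 (mem_filter.1 hp).1
  have hblock : ∀ p ∈ P, Nat.log 2 (p / q) ∈ range (Nat.log 2 X + 1) := fun p hp ↦
    mem_range_succ_iff.2 (Nat.log_mono_right ((Nat.div_le_self p q).trans (hqX p hp).2))
  have hfiber : ∀ i, ({p ∈ P | Nat.log 2 (p / q) = i} : Finset ℕ) ⊆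
      {p ∈ Ico (2 ^ i * q) (2 ^ (i + 1) * q) | p.Prime ∧ p ≡ c [MOD q]} := fun i p hp ↦ by
    obtain ⟨hpP, rfl⟩ := mem_filter.1 hp
    have hpq : p / q ≠ 0 := (Nat.div_pos (hqX p hpP).1 hq0).ne'
    have hlow := (Nat.le_div_iff_mul_le hq0).1 (Nat.pow_log_le_self 2 hpq)
    have hupp := (Nat.div_lt_iff_lt_mul hq0).1 (Nat.lt_pow_succ_log_self one_lt_two (p / q))
    exact mem_filter.2 ⟨mem_Ico.2 ⟨hlow, hupp⟩, (mem_filter.1 hpP).2⟩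
  have hterm : ∀ i ∈ range (Nat.log 2 X + 1), ∑ p ∈ P with Nat.log 2 (p / q) = i, (p : ℝ)⁻¹ ≤
      32 * S / q * ((i : ℝ) + 1)⁻¹ := fun i _ ↦
    calc ∑ p ∈ P with Nat.log 2 (p / q) = i, (p : ℝ)⁻¹
        ≤ ∑ p ∈ Ico (2 ^ i * q) (2 ^ (i + 1) * q) with p.Prime ∧ p ≡ c [MOD q], (p : ℝ)⁻¹ :=
          sum_le_sum_of_subset_of_nonneg (hfiber i) fun _ _ _ ↦ by positivity
      _ ≤ #{p ∈ Ico (2 ^ i * q) (2 ^ (i + 1) * q) | p.Prime ∧ p ≡ c [MOD q]} •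
            ((2 : ℝ) ^ i * q)⁻¹ := sum_le_card_nsmul _ _ _ fun p hp ↦ by
          have : 2 ^ i * q ≤ p := (mem_Ico.1 (mem_filter.1 hp).1).1
          gcongr
          exact_mod_cast this
      _ ≤ 32 * S * 2 ^ i / (i + 1) * ((2 : ℝ) ^ i * q)⁻¹ := by
          rw [nsmul_eq_mul]
          gcongr
          exact card_primes_modEq_dyadic_le hq c i
      _ = 32 * S / q * ((i : ℝ) + 1)⁻¹ := by field_simp
  have hharmonic : ∑ i ∈ range (Nat.log 2 X + 1), ((i : ℝ) + 1)⁻¹ ≤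
      1 + Real.log (Nat.log 2 X + 1) := by
    have := harmonic_le_one_add_log (Nat.log 2 X + 1)
    rw [harmonic] at this
    push_cast at this
    exact this
  rw [← sum_fiberwise_of_maps_to hblock]
  refine (sum_le_sum hterm).trans ?_
  rw [← mul_sum]
  gcongr

end PrimesInProgressions

section PairsOfPrimes

/-- The primes `p ≤ X` with `p ≡ ±1 [MOD ℓ]`, for a prime `ℓ`. -/
def primesSqModEqOne (ℓ X : ℕ) : Finset ℕ :=
  {p ∈ Icc 1 X | p.Prime ∧ p ^ 2 ≡ 1 [MOD ℓ]}

lemma mem_primesSqModEqOne {ℓ X p : ℕ} :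
    p ∈ primesSqModEqOne ℓ X ↔ (1 ≤ p ∧ p ≤ X) ∧ p.Prime ∧ p ^ 2 ≡ 1 [MOD ℓ] := by
  simp only [primesSqModEqOne, mem_filter, mem_Icc]

variable {ℓ X : ℕ}

lemma modEq_one_or_sub_one_of_sq_modEq_one (hℓ : ℓ.Prime) {n : ℕ} (hn : n ^ 2 ≡ 1 [MOD ℓ]) :
    n ≡ 1 [MOD ℓ] ∨ n ≡ ℓ - 1 [MOD ℓ] := by
  have := Fact.mk hℓ
  simp only [← ZMod.natCast_eq_natCast_iff, Nat.cast_sub hℓ.one_le] at hn ⊢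
  simpa using hn

lemma le_of_mem_primesSqModEqOne (hℓ : ℓ.Prime) (h3 : 3 < ℓ) {p : ℕ}
    (hp : p ∈ primesSqModEqOne ℓ X) : ℓ ≤ p := by
  obtain ⟨-, hpp, hsq⟩ := mem_primesSqModEqOne.1 hp
  by_contra! hlt
  rcases modEq_one_or_sub_one_of_sq_modEq_one hℓ hsq with h | h
  · exact hpp.ne_one (h.eq_of_lt_of_lt hlt hℓ.one_lt)
  · have hpℓ := h.eq_of_lt_of_lt hlt (Nat.sub_lt hℓ.pos one_pos)
    have hℓodd := hℓ.odd_of_ne_two (by omega)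
    have hpodd := hpp.odd_of_ne_two (by omega)
    grind

lemma sum_inv_primesSqModEqOne_le (hℓ : ℓ.Prime) (h3 : 3 < ℓ) (X : ℕ) :
    ∑ p ∈ primesSqModEqOne ℓ X, (p : ℝ)⁻¹ ≤ 128 * (1 + Real.log (Nat.log 2 X + 1)) / ℓ := by
  set P := fun c ↦ {p ∈ Icc ℓ X | p.Prime ∧ p ≡ c [MOD ℓ]}
  have hsub : primesSqModEqOne ℓ X ⊆ P 1 ∪ P (ℓ - 1) := fun p hp ↦ by
    obtain ⟨⟨-, hpX⟩, hpp, hsq⟩ := mem_primesSqModEqOne.1 hp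
    have hpI := mem_Icc.2 ⟨le_of_mem_primesSqModEqOne hℓ h3 hp, hpX⟩
    rcases modEq_one_or_sub_one_of_sq_modEq_one hℓ hsq with h | h
    · exact mem_union_left _ (mem_filter.2 ⟨hpI, hpp, h⟩)
    · exact mem_union_right _ (mem_filter.2 ⟨hpI, hpp, h⟩)
  have hdivisors : ∑ k ∈ ℓ.divisors, (k : ℝ)⁻¹ ≤ 2 := by
    have : (ℓ : ℝ)⁻¹ ≤ 1 := inv_le_one_of_one_le₀ (mod_cast hℓ.one_le)
    rw [hℓ.sum_divisors, Nat.cast_one, inv_one]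
    linarith
  have hlog : 0 ≤ Real.log (Nat.log 2 X + 1) := Real.log_nonneg (by simp)
  have hP (c : ℕ) : ∑ p ∈ P c, (p : ℝ)⁻¹ ≤ 64 * (1 + Real.log (Nat.log 2 X + 1)) / ℓ :=
    calc ∑ p ∈ P c, (p : ℝ)⁻¹ ≤
          32 * (∑ k ∈ ℓ.divisors, (k : ℝ)⁻¹) / ℓ * (1 + Real.log (Nat.log 2 X + 1)) :=
        sum_inv_primes_modEq_le hℓ.one_lt c X
      _ ≤ 32 * 2 / ℓ * (1 + Real.log (Nat.log 2 X + 1)) := by gcongr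
      _ = 64 * (1 + Real.log (Nat.log 2 X + 1)) / ℓ := by ring
  calc ∑ p ∈ primesSqModEqOne ℓ X, (p : ℝ)⁻¹
      ≤ ∑ p ∈ P 1 ∪ P (ℓ - 1), (p : ℝ)⁻¹ :=
        sum_le_sum_of_subset_of_nonneg hsub fun _ _ _ ↦ by positivity
    _ ≤ ∑ p ∈ P 1, (p : ℝ)⁻¹ + ∑ p ∈ P (ℓ - 1), (p : ℝ)⁻¹ := by
        rw [← sum_union_inter]
        exact le_add_of_nonneg_right (sum_nonneg fun _ _ ↦ by positivity)
    _ ≤ 64 * (1 + Real.log (Nat.log 2 X + 1)) / ℓ + 64 * (1 + Real.log (Nat.log 2 X + 1)) / ℓ :=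
        add_le_add (hP _) (hP _)
    _ = 128 * (1 + Real.log (Nat.log 2 X + 1)) / ℓ := by ring

lemma card_exists_ne_dvd_le {S : Finset ℕ} (hS : ∀ p ∈ S, p.Prime) (X : ℕ) :
    (#{N ∈ Ioc 0 X | ∃ p ∈ S, ∃ q ∈ S, p ≠ q ∧ p ∣ N ∧ q ∣ N} : ℝ) ≤
      X * (∑ p ∈ S, (p : ℝ)⁻¹) ^ 2 := by
  have hcover : {N ∈ Ioc 0 X | ∃ p ∈ S, ∃ q ∈ S, p ≠ q ∧ p ∣ N ∧ q ∣ N} ⊆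
      (S ×ˢ S).biUnion fun t ↦ {N ∈ Ioc 0 X | t.1 * t.2 ∣ N} := fun N hN ↦ by
    obtain ⟨hNX, p, hp, q, hq, hpq, hpN, hqN⟩ := mem_filter.1 hN
    have hcop := (Nat.coprime_primes (hS p hp) (hS q hq)).2 hpq
    exact mem_biUnion.2 ⟨(p, q), mem_product.2 ⟨hp, hq⟩,
      mem_filter.2 ⟨hNX, hcop.mul_dvd_of_dvd_of_dvd hpN hqN⟩⟩
  calc (#{N ∈ Ioc 0 X | ∃ p ∈ S, ∃ q ∈ S, p ≠ q ∧ p ∣ N ∧ q ∣ N} : ℝ)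
      ≤ ∑ t ∈ S ×ˢ S, (#{N ∈ Ioc 0 X | t.1 * t.2 ∣ N} : ℝ) :=
        mod_cast (card_le_card hcover).trans card_biUnion_le
    _ ≤ ∑ t ∈ S ×ˢ S, X * ((t.1 : ℝ)⁻¹ * (t.2 : ℝ)⁻¹) := sum_le_sum fun t _ ↦ by
        rw [Nat.Ioc_filter_dvd_card_eq_div, ← mul_inv, ← div_eq_mul_inv, ← Nat.cast_mul]
        exact Nat.cast_div_le
    _ = X * (∑ p ∈ S, (p : ℝ)⁻¹) ^ 2 := by rw [← mul_sum, sq, sum_mul_sum, ← sum_product']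

theorem ncard_le_of_exists_ne_dvd_primesSqModEqOne {Y : ℕ} (hY : 3 ≤ Y) {𝒩 : Set ℕ}
    (h𝒩 : ∀ N ∈ 𝒩, N ∈ Ioc 0 X ∧ ∃ ℓ, ℓ.Prime ∧ Y < ℓ ∧
      ∃ p ∈ primesSqModEqOne ℓ X, ∃ q ∈ primesSqModEqOne ℓ X, p ≠ q ∧ p ∣ N ∧ q ∣ N) :
    (𝒩.ncard : ℝ) ≤ X * (128 * (1 + Real.log (Nat.log 2 X + 1))) ^ 2 * (2 / (Y + 1)) := by
  set M := fun ℓ ↦ {N ∈ Ioc 0 X |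
    ∃ p ∈ primesSqModEqOne ℓ X, ∃ q ∈ primesSqModEqOne ℓ X, p ≠ q ∧ p ∣ N ∧ q ∣ N}
  set B := 128 * (1 + Real.log (Nat.log 2 X + 1))
  set L := {ℓ ∈ Ioo Y (X + 1) | ℓ.Prime}
  have hcover : 𝒩 ⊆ L.biUnion M := fun N hN ↦ by
    obtain ⟨hNX, ℓ, hℓ, hYℓ, p, hp, q, hq, hpq⟩ := h𝒩 N hN
    have hℓX := (le_of_mem_primesSqModEqOne hℓ (hY.trans_lt hYℓ) hp).trans
      (mem_primesSqModEqOne.1 hp).1.2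
    exact mem_biUnion.2 ⟨ℓ, mem_filter.2 ⟨mem_Ioo.2 ⟨hYℓ, Nat.lt_succ_iff.2 hℓX⟩, hℓ⟩,
      mem_filter.2 ⟨hNX, p, hp, q, hq, hpq⟩⟩
  have hcard : 𝒩.ncard ≤ ∑ ℓ ∈ L, #(M ℓ) := by
    refine (Set.ncard_le_ncard hcover (finite_toSet _)).trans ?_
    rw [Set.ncard_coe_finset]
    exact card_biUnion_le
  have hM : ∀ ℓ ∈ L, (#(M ℓ) : ℝ) ≤ X * B ^ 2 * ((ℓ : ℝ) ^ 2)⁻¹ :=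
    fun ℓ hℓ ↦ by
      obtain ⟨hYℓ, hℓp⟩ := mem_filter.1 hℓ
      calc (#(M ℓ) : ℝ) ≤ X * (∑ p ∈ primesSqModEqOne ℓ X, (p : ℝ)⁻¹) ^ 2 :=
            card_exists_ne_dvd_le (fun p hp ↦ (mem_primesSqModEqOne.1 hp).2.1) X
        _ ≤ X * (B / ℓ) ^ 2 := by
            gcongr
            exact sum_inv_primesSqModEqOne_le hℓp (hY.trans_lt (mem_Ioo.1 hYℓ).1) X
        _ = X * B ^ 2 * ((ℓ : ℝ) ^ 2)⁻¹ := by ring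
  calc (𝒩.ncard : ℝ) ≤ ∑ ℓ ∈ L, (#(M ℓ) : ℝ) := mod_cast hcard
    _ ≤ ∑ ℓ ∈ L, X * B ^ 2 * ((ℓ : ℝ) ^ 2)⁻¹ := sum_le_sum hM
    _ ≤ ∑ ℓ ∈ Ioo Y (X + 1), X * B ^ 2 * ((ℓ : ℝ) ^ 2)⁻¹ :=
        sum_le_sum_of_subset_of_nonneg (filter_subset _ _) fun _ _ _ ↦ by positivity
    _ = X * B ^ 2 * ∑ ℓ ∈ Ioo Y (X + 1), ((ℓ : ℝ) ^ 2)⁻¹ := by rw [mul_sum]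
    _ ≤ X * B ^ 2 * (2 / (Y + 1)) := by
        gcongr
        exact sum_Ioo_inv_sq_le Y (X + 1)

end PairsOfPrimes

section LN

lemma exists_ne_dvd_of_dvd_prod_div_lcm {ι : Type*} {S : Finset ι} {f : ι → ℕ}
    (hf : ∀ i ∈ S, f i ≠ 0) {ℓ : ℕ} (hℓ : ℓ.Prime) (h : ℓ ∣ (∏ i ∈ S, f i) / S.lcm f) :
    ∃ i ∈ S, ∃ j ∈ S, i ≠ j ∧ ℓ ∣ f i ∧ ℓ ∣ f j := by
  classical
  have hlcm : S.lcm f ∣ ∏ i ∈ S, f i := Finset.lcm_dvd fun i hi ↦ dvd_prod_of_mem f hi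
  have hmul : S.lcm f * ℓ ∣ ∏ i ∈ S, f i :=
    (mul_dvd_mul_left _ h).trans (Nat.mul_div_cancel' hlcm).dvd
  obtain ⟨i, hi, hℓi⟩ := (hℓ.prime.dvd_finsetProd_iff f).1 ((dvd_mul_left ℓ _).trans hmul)
  have hrest : f i * ℓ ∣ f i * ∏ j ∈ S.erase i, f j := by
    rw [mul_prod_erase S f hi]
    exact (mul_dvd_mul_right (dvd_lcm hi) ℓ).trans hmul
  obtain ⟨j, hj, hℓj⟩ := (hℓ.prime.dvd_finsetProd_iff f).1
    (Nat.dvd_of_mul_dvd_mul_left (Nat.pos_of_ne_zero (hf i hi)) hrest)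
  exact ⟨i, hi, j, mem_of_mem_erase hj, (ne_of_mem_erase hj).symm, hℓi, hℓj⟩

variable (A : Matrix (Fin 2) (Fin 2) ℤ)

lemma dvd_of_mem_primeFactors_dZero {N p : ℕ} (hp : p ∈ (dZero A N).primeFactors) : p ∣ N := by
  have hpp := Nat.prime_of_mem_primeFactors hp
  have hsqf : p ∣ sqfPart N :=
    (Nat.dvd_of_mem_primeFactors hp).trans (Nat.div_dvd_of_dvd (Nat.gcd_dvd_left _ _))
  obtain ⟨q, hq, hpq⟩ := (hpp.prime.dvd_finsetProd_iff _).1 hsqf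
  exact (hpp.dvd_of_dvd_pow hpq).trans (Nat.dvd_of_mem_primeFactors hq)

lemma chi_sq (p : ℕ) : chi A p ^ 2 = 1 := by
  unfold chi
  split_ifs <;> rfl

lemma natAbs_sub_chi_ne_zero {p : ℕ} (hp : p.Prime) : ((p : ℤ) - chi A p).natAbs ≠ 0 := by
  rw [Int.natAbs_ne_zero, sub_ne_zero]
  intro h
  have hsq : (p : ℤ) ^ 2 = 1 := h ▸ chi_sq A p
  exact hp.ne_one (by simpa using hsq)

lemma sq_modEq_one_of_dvd_natAbs_sub_chi {ℓ p : ℕ} (h : ℓ ∣ ((p : ℤ) - chi A p).natAbs) :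
    p ^ 2 ≡ 1 [MOD ℓ] := by
  refine ((Nat.modEq_iff_dvd.2 ?_ : 1 ≡ p ^ 2 [MOD ℓ])).symm
  have hfactor : ((p ^ 2 : ℕ) : ℤ) - (1 : ℕ) = (p - chi A p) * (p + chi A p) := by
    push_cast
    linear_combination chi_sq A p
  exact hfactor ▸ (Int.natCast_dvd.2 h).mul_right _

lemma exists_ne_dvd_of_dvd_LN {N X ℓ : ℕ} (hN : N ∈ Ioc 0 X) (hℓ : ℓ.Prime) (hdvd : ℓ ∣ LN A N) :
    ∃ p ∈ primesSqModEqOne ℓ X, ∃ q ∈ primesSqModEqOne ℓ X, p ≠ q ∧ p ∣ N ∧ q ∣ N := by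
  obtain ⟨hN0, hNX⟩ := mem_Ioc.1 hN
  have hmem : ∀ p ∈ (dZero A N).primeFactors, ℓ ∣ ((p : ℤ) - chi A p).natAbs →
      p ∈ primesSqModEqOne ℓ X := fun p hp hℓp ↦ by
    have hpp := Nat.prime_of_mem_primeFactors hp
    exact mem_primesSqModEqOne.2 ⟨⟨hpp.one_le,
      (Nat.le_of_dvd hN0 (dvd_of_mem_primeFactors_dZero A hp)).trans hNX⟩, hpp,
      sq_modEq_one_of_dvd_natAbs_sub_chi A hℓp⟩
  obtain ⟨p, hp, q, hq, hpq, hℓp, hℓq⟩ := exists_ne_dvd_of_dvd_prod_div_lcm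
    (fun p hp ↦ natAbs_sub_chi_ne_zero A (Nat.prime_of_mem_primeFactors hp)) hℓ hdvd
  exact ⟨p, hmem p hp hℓp, q, hmem q hq hℓq, hpq, dvd_of_mem_primeFactors_dZero A hp,
    dvd_of_mem_primeFactors_dZero A hq⟩

end LN

lemma one_add_log_natLog_two_floor_le {x : ℝ} (hx : Real.exp (Real.exp 1) ≤ x) :
    1 + Real.log (Nat.log 2 ⌊x⌋₊ + 1) ≤ 4 * Real.log (Real.log x) := by
  have hx1 : 1 ≤ x := (Real.one_le_exp (Real.exp_pos 1).le).trans hx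
  have hexp : Real.exp 1 ≤ Real.log x := (Real.le_log_iff_exp_le (zero_lt_one.trans_le hx1)).2 hx
  have hlog : 1 ≤ Real.log x := (Real.one_le_exp zero_le_one).trans hexp
  have hlog0 : 0 < Real.log x := zero_lt_one.trans_le hlog
  have hloglog : 1 ≤ Real.log (Real.log x) := (Real.le_log_iff_exp_le hlog0).2 hexp
  have hnatLog : (Nat.log 2 ⌊x⌋₊ : ℝ) + 1 ≤ 3 * Real.log x := by
    have hpow : (2 : ℝ) ^ Nat.log 2 ⌊x⌋₊ ≤ x :=
      calc (2 : ℝ) ^ Nat.log 2 ⌊x⌋₊ ≤ ⌊x⌋₊ :=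
            mod_cast Nat.pow_log_le_self 2 (Nat.floor_pos.2 hx1).ne'
        _ ≤ x := Nat.floor_le (zero_le_one.trans hx1)
    have := Real.log_le_log (by positivity) hpow
    rw [Real.log_pow] at this
    nlinarith [Real.log_two_gt_d9]
  have hlog3 : Real.log 3 ≤ 2 := by linarith [Real.log_le_sub_one_of_pos (x := 3) (by norm_num)]
  have := Real.log_le_log (by positivity) hnatLog
  rw [Real.log_mul three_ne_zero hlog0.ne'] at this
  linarith

theorem LN_smooth_for_most_general :
    ∃ C : ℝ, 0 < C ∧ ∃ x₀ : ℝ, ∀ (A : Matrix (Fin 2) (Fin 2) ℤ) (x : ℝ), x₀ ≤ x →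
      ({N : ℕ | 1 ≤ N ∧ (N : ℝ) ≤ x ∧
          ∃ ℓ : ℕ, ℓ.Prime ∧ Real.log (Real.log x) ^ 3 < (ℓ : ℝ) ∧ ℓ ∣ LN A N}.ncard : ℝ) ≤
        C * x / Real.log (Real.log x) := by
  refine ⟨2 * 512 ^ 2, by norm_num, Real.exp (Real.exp 2), fun A x hx ↦ ?_⟩
  have hx0 : 0 < x := (Real.exp_pos _).trans_le hx
  have hlogx : Real.exp 2 ≤ Real.log x := (Real.le_log_iff_exp_le hx0).2 hx
  have hloglog : 2 ≤ Real.log (Real.log x) :=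
    (Real.le_log_iff_exp_le ((Real.exp_pos 2).trans_le hlogx)).2 hlogx
  have hlog : 1 + Real.log (Nat.log 2 ⌊x⌋₊ + 1) ≤ 4 * Real.log (Real.log x) :=
    one_add_log_natLog_two_floor_le
      ((Real.exp_le_exp.2 (Real.exp_le_exp.2 one_le_two)).trans hx)
  set LL := Real.log (Real.log x)
  have hY : 3 ≤ ⌊LL ^ 3⌋₊ := Nat.le_floor <| by
    push_cast
    linarith [pow_le_pow_left₀ zero_le_two hloglog 3]
  have hlogpos : 0 ≤ Real.log (Nat.log 2 ⌊x⌋₊ + 1) := Real.log_nonneg (by simp)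
  refine (ncard_le_of_exists_ne_dvd_primesSqModEqOne (X := ⌊x⌋₊) hY ?_).trans ?_
  · rintro N ⟨hN1, hNx, ℓ, hℓ, hLLℓ, hdvd⟩
    have hN := mem_Ioc.2 ⟨hN1, Nat.le_floor hNx⟩
    exact ⟨hN, ℓ, hℓ, (Nat.floor_lt (by positivity)).2 hLLℓ, exists_ne_dvd_of_dvd_LN A hN hℓ hdvd⟩
  · calc (⌊x⌋₊ : ℝ) * (128 * (1 + Real.log (Nat.log 2 ⌊x⌋₊ + 1))) ^ 2 * (2 / (⌊LL ^ 3⌋₊ + 1))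
        ≤ x * (128 * (4 * LL)) ^ 2 * (2 / LL ^ 3) := by
          gcongr
          exacts [Nat.floor_le hx0.le, (Nat.lt_floor_add_one _).le]
      _ = 2 * 512 ^ 2 * x / LL := by field_simp; norm_num

/-- For all large `x`, the number of `N ≤ x` such that `L(N)` has a prime
factor exceeding `(log log x)³` is `O(x / log log x)`. -/
theorem LN_smooth_for_most
    (A : Matrix (Fin 2) (Fin 2) ℤ) (hA : A.det = 1) (htr : 2 < |A.trace|) :
    ∃ C : ℝ, 0 < C ∧ ∃ x₀ : ℝ, ∀ x : ℝ, x₀ ≤ x →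
      ({N : ℕ | 1 ≤ N ∧ (N : ℝ) ≤ x ∧
          ∃ ℓ : ℕ, ℓ.Prime ∧ Real.log (Real.log x) ^ 3 < (ℓ : ℝ) ∧ ℓ ∣ LN A N}.ncard : ℝ) ≤
        C * x / Real.log (Real.log x) := by
  obtain ⟨C, hC, x₀, hbound⟩ := LN_smooth_for_most_general
  exact ⟨C, hC, x₀, hbound A⟩
end

section
/- For every ε > 0 there is an x₀ such that for all x ≥ x₀, the number of integers N ≤ x with ord(A,N) < (∏_{p | d_0(N)} ord(A,p)) / exp(3·(log log x)⁴) is at most ε·x, where the product runs over the distinct prime divisors p of d_0(N). -/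
open Matrix Finset

/-!
For `p ∣ d₀(N)` the order of `A` modulo `p` divides `p - 1` or `p + 1`, and it divides `ord(A,N)`.
Writing `log ord(A,p) = ∑ Λ(m)` over `m ∣ ord(A,p)`, the sum of these logarithms exceeds
`log ord(A,N)` by at most `∑ Λ(m) (c(m) - 1)⁺`, where `c(m)` counts the primes `p ∣ N` with
`p ≡ ±1 (mod m)`. If `S(m)` is the sum of `1/p` over all primes `p ≤ x` of this kind, the mean over
`N ≤ x` of `(c(m) - 1)⁺` is at most `min (S(m)) (S(m)²) ≤ S(m) ^ s` for `1 ≤ s ≤ 2`. A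
Chebyshev-type argument gives `S(m) ≪ (log m / m) log log x` uniformly in `m ≥ 2`, so the mean of
the excess is `≪ (log log x) ^ s ∑ Λ(m) (log m / m) ^ s`, where the series converges for `s > 1`.
Markov's inequality concludes.
-/

section SieveBound

open scoped Nat

lemma pow_dvd_pow_of_pow_dvd_factorial {p m n v : ℕ} (hp : p.Prime) (hpm : p ∣ m)
    (h : p ^ v ∣ n !) : p ^ v ∣ m ^ n := by
  have : Fact p.Prime := ⟨hp⟩
  have hvn : v ≤ n :=
    ((padicValNat_dvd_iff_le n.factorial_ne_zero).1 h).trans (padicValNat_factorial_le p n)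
  exact (pow_dvd_pow p hvn).trans (pow_dvd_pow_of_dvd hpm n)

lemma dvd_prod_arithProg_of_coprime {q m n : ℕ} (b : ℕ) (hmq : m.Coprime q) (h : q ∣ n !) :
    q ∣ ∏ k ∈ range n, (m * k + b) := by
  obtain ⟨c, hc⟩ : ∃ c : ℕ, (m : ZMod q) * c = b := by
    have : NeZero q := ⟨ne_zero_of_dvd_ne_zero n.factorial_ne_zero h⟩
    refine ⟨(b * (m : ZMod q)⁻¹ : ZMod q).val, ?_⟩
    rw [ZMod.natCast_zmod_val, mul_left_comm, ZMod.coe_mul_inv_eq_one m hmq, mul_one]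
  have hprod : ((∏ k ∈ range n, (m * k + b) : ℕ) : ZMod q) =
      m ^ n * ((∏ k ∈ range n, (c + k) : ℕ) : ZMod q) := by
    push_cast
    calc ∏ k ∈ range n, ((m : ZMod q) * k + b) = ∏ k ∈ range n, (m : ZMod q) * (c + k) :=
          prod_congr rfl fun k _ => by rw [← hc]; ring
      _ = m ^ n * ∏ k ∈ range n, ((c : ZMod q) + k) := by
          rw [prod_mul_distrib, prod_const, card_range]
  have hfact : q ∣ ∏ k ∈ range n, (c + k) := by
    rw [← Nat.ascFactorial_eq_prod_range]
    exact h.trans (Nat.factorial_dvd_ascFactorial c n)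
  rw [← ZMod.natCast_eq_zero_iff, hprod, (ZMod.natCast_eq_zero_iff _ q).2 hfact, mul_zero]

lemma factorial_dvd_pow_mul_prod_arithProg (m b n : ℕ) :
    n ! ∣ m ^ n * ∏ k ∈ range n, (m * k + b) := by
  rw [Nat.dvd_iff_prime_pow_dvd_dvd]
  intro p v hp hv
  by_cases hpm : p ∣ m
  · exact (pow_dvd_pow_of_pow_dvd_factorial hp hpm hv).mul_right _
  · have hcop : m.Coprime (p ^ v) := ((hp.coprime_iff_not_dvd.2 hpm).symm).pow_right v
    exact (dvd_prod_arithProg_of_coprime b hcop hv).mul_left _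

lemma prod_arithProg_pred_mul_succ_le {m : ℕ} (hm : 1 ≤ m) (n : ℕ) :
    ∏ k ∈ range n, (m * k + (m - 1)) * (m * k + (m + 1)) ≤ m ^ (2 * n) * n ! ^ 2 := by
  have hfactor : ∀ k, (m * k + (m - 1)) * (m * k + (m + 1)) ≤ m ^ 2 * (k + 1) ^ 2 := by
    obtain ⟨l, rfl⟩ := Nat.exists_eq_add_of_le' hm
    intro k
    rw [Nat.add_sub_cancel]
    nlinarith
  calc _ ≤ ∏ k ∈ range n, m ^ 2 * (k + 1) ^ 2 := prod_le_prod' fun k _ => hfactor k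
    _ = m ^ (2 * n) * n ! ^ 2 := by
      rw [prod_mul_distrib, prod_const, card_range, ← pow_mul, prod_pow,
        prod_range_add_one_eq_factorial]

-- Every prime in `T` divides `Q = ∏ ((m (k + 1))² - 1)` but not `n!`, and `(n!)² ∣ m ^ (2 n) Q`,
-- where `Q ≤ m ^ (2 n) (n!)²`.
lemma prod_primes_le_pow {m n : ℕ} (hm : 2 ≤ m) {T : Finset ℕ}
    (hT : ∀ p ∈ T, p.Prime ∧ n < p ∧ ∃ k < n, p + 1 = m * (k + 1) ∨ p = m * (k + 1) + 1) :
    ∏ p ∈ T, p ≤ m ^ (4 * n) := by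
  set Q := ∏ k ∈ range n, (m * k + (m - 1)) * (m * k + (m + 1))
  have hQpos : 0 < Q := prod_pos fun k _ => Nat.mul_pos (by omega) (by omega)
  obtain ⟨Y, hY⟩ : n ! ^ 2 ∣ m ^ (2 * n) * Q := by
    have h := mul_dvd_mul (factorial_dvd_pow_mul_prod_arithProg m (m - 1) n)
      (factorial_dvd_pow_mul_prod_arithProg m (m + 1) n)
    rwa [mul_mul_mul_comm, ← prod_mul_distrib, ← pow_add, ← two_mul, ← sq] at h
  have hTY : ∏ p ∈ T, p ∣ Y := by
    have hTQ : ∏ p ∈ T, p ∣ Q := by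
      refine prod_primes_dvd Q (fun p hp => (hT p hp).1.prime) fun p hp => ?_
      obtain ⟨-, -, k, hk, hpk⟩ := hT p hp
      refine dvd_trans ?_ (dvd_prod_of_mem _ (mem_range.2 hk))
      rw [mul_add_one] at hpk
      rcases hpk with h | h
      · exact Dvd.intro _ (by rw [show p = m * k + (m - 1) by omega])
      · exact Dvd.intro_left _ (by rw [h, add_assoc])
    have hcop : (∏ p ∈ T, p).Coprime (n ! ^ 2) :=
      Nat.Coprime.pow_right 2 (Nat.Coprime.prod_left fun p hp =>
        ((hT p hp).1.coprime_iff_not_dvd.2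
          fun h => (hT p hp).2.1.not_ge (((hT p hp).1.dvd_factorial).1 h)))
    exact hcop.dvd_of_dvd_mul_left (hY ▸ hTQ.mul_left _)
  have hYpos : 0 < Y := Nat.pos_of_mul_pos_left (hY ▸ Nat.mul_pos (by positivity) hQpos)
  refine (Nat.le_of_dvd hYpos hTY).trans (Nat.le_of_mul_le_mul_left ?_ (pow_pos n.factorial_pos 2))
  calc n ! ^ 2 * Y = m ^ (2 * n) * Q := hY.symm
    _ ≤ m ^ (2 * n) * (m ^ (2 * n) * n ! ^ 2) :=
        Nat.mul_le_mul_left _ (prod_arithProg_pred_mul_succ_le (by omega) n)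
    _ = n ! ^ 2 * m ^ (4 * n) := by ring

/-- The primes `p ≤ X` with `p ≡ ±1 (mod m)`: apart from the divisors of `D_A`, the only
primes `p ≤ X` for which `m` can divide `ord(A,p)`. -/
def primesPMOne (m X : ℕ) : Finset ℕ :=
  {p ∈ range (X + 1) | p.Prime ∧ (m ∣ p - 1 ∨ m ∣ p + 1)}

lemma mem_primesPMOne {m X p : ℕ} :
    p ∈ primesPMOne m X ↔ p ≤ X ∧ p.Prime ∧ (m ∣ p - 1 ∨ m ∣ p + 1) := by
  rw [primesPMOne, mem_filter, mem_range, Nat.lt_succ_iff]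

lemma prod_primesPMOne_dyadic_le {m : ℕ} (hm : 2 ≤ m) (X i : ℕ) :
    ∏ p ∈ primesPMOne m X with Nat.log 2 p = i, p ≤ m ^ (4 * (2 ^ (i + 1) / m)) := by
  refine prod_primes_le_pow hm fun p hp => ?_
  obtain ⟨hpX, rfl⟩ := mem_filter.1 hp
  obtain ⟨-, hprime, hmod⟩ := mem_primesPMOne.1 hpX
  have hlow : 2 ^ (Nat.log 2 p + 1) ≤ 2 * p := by
    rw [pow_succ']
    exact Nat.mul_le_mul_left 2 (Nat.pow_log_le_self 2 hprime.ne_zero)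
  have hupp : p < 2 ^ (Nat.log 2 p + 1) := Nat.lt_pow_succ_log_self one_lt_two p
  refine ⟨hprime, Nat.div_lt_of_lt_mul (lt_of_le_of_ne (hlow.trans ?_) fun heq => ?_), ?_⟩
  · exact Nat.mul_le_mul_right p hm
  · have hp2 : p = 2 := (Nat.prime_dvd_prime_iff_eq hprime Nat.prime_two).1
      (hprime.dvd_of_dvd_pow (heq ▸ dvd_mul_left p m))
    have hm2 : m ≤ 2 := Nat.le_of_mul_le_mul_right (heq ▸ hlow) hprime.pos
    obtain rfl : m = 2 := le_antisymm hm2 hm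
    omega
  · obtain ⟨l, hl⟩ : ∃ l, p + 1 = m * (l + 1) ∨ p = m * (l + 1) + 1 := by
      have := hprime.two_le
      rcases hmod with ⟨_ | l, hl⟩ | ⟨_ | l, hl⟩
      · omega
      · exact ⟨l, Or.inr (by omega)⟩
      · omega
      · exact ⟨l, Or.inl hl⟩
    refine ⟨l, (Nat.le_div_iff_mul_le (by omega)).2 ?_, hl⟩
    rw [Nat.succ_eq_add_one, mul_comm]
    omega

lemma sum_log_primesPMOne_dyadic_le {m : ℕ} (hm : 2 ≤ m) (X i : ℕ) :
    ∑ p ∈ primesPMOne m X with Nat.log 2 p = i, Real.log p ≤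
      4 * (2 ^ (i + 1) / m) * Real.log m := by
  have hpos : ∀ p ∈ {p ∈ primesPMOne m X | Nat.log 2 p = i}, 0 < p := fun p hp =>
    (mem_primesPMOne.1 (mem_filter.1 hp).1).2.1.pos
  have hdiv : ((2 ^ (i + 1) / m : ℕ) : ℝ) ≤ 2 ^ (i + 1) / m := by
    exact_mod_cast Nat.cast_div_le (α := ℝ)
  calc _ = Real.log ((∏ p ∈ primesPMOne m X with Nat.log 2 p = i, p : ℕ) : ℝ) := by
        rw [Nat.cast_prod, Real.log_prod]
        exact fun p hp => Nat.cast_ne_zero.2 (hpos p hp).ne'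
    _ ≤ Real.log ((m : ℝ) ^ (4 * (2 ^ (i + 1) / m))) :=
        Real.log_le_log (Nat.cast_pos.2 (prod_pos hpos))
          (by exact_mod_cast prod_primesPMOne_dyadic_le hm X i)
    _ = 4 * (2 ^ (i + 1) / m : ℕ) * Real.log m := by rw [Real.log_pow]; push_cast; ring
    _ ≤ 4 * (2 ^ (i + 1) / m) * Real.log m := by gcongr

lemma sum_one_div_primesPMOne_dyadic_le {m i : ℕ} (hm : 2 ≤ m) (hi : 0 < i) (X : ℕ) :
    ∑ p ∈ primesPMOne m X with Nat.log 2 p = i, (1 / p : ℝ) ≤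
      8 / Real.log 2 * (Real.log m / m) * (i : ℝ)⁻¹ := by
  have hterm : ∀ p ∈ {p ∈ primesPMOne m X | Nat.log 2 p = i},
      (1 / p : ℝ) ≤ Real.log p / (2 ^ i * (i * Real.log 2)) := by
    intro p hp
    obtain ⟨hpX, hpi⟩ := mem_filter.1 hp
    have hprime := (mem_primesPMOne.1 hpX).2.1
    have hlow : (2 : ℝ) ^ i ≤ p := by
      exact_mod_cast hpi ▸ Nat.pow_log_le_self 2 hprime.ne_zero
    have hlog : i * Real.log 2 ≤ Real.log p := by
      rw [← Real.log_pow]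
      exact Real.log_le_log (by positivity) hlow
    rw [div_le_div_iff₀ (Nat.cast_pos.2 hprime.pos) (by positivity), one_mul, mul_comm]
    gcongr
  calc _ ≤ ∑ p ∈ primesPMOne m X with Nat.log 2 p = i,
        Real.log p / (2 ^ i * (i * Real.log 2)) := sum_le_sum hterm
    _ ≤ 4 * (2 ^ (i + 1) / m) * Real.log m / (2 ^ i * (i * Real.log 2)) := by
        rw [← sum_div]
        gcongr
        exact sum_log_primesPMOne_dyadic_le hm X i
    _ = _ := by field_simp; ring

lemma sum_one_div_primesPMOne_le {m : ℕ} (hm : 2 ≤ m) (X : ℕ) :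
    ∑ p ∈ primesPMOne m X, (1 / p : ℝ) ≤
      8 / Real.log 2 * (Real.log m / m) * (1 + Real.log (Nat.log 2 X)) := by
  have hmaps : ∀ p ∈ primesPMOne m X, Nat.log 2 p ∈ Icc 1 (Nat.log 2 X) := by
    intro p hp
    obtain ⟨hpX, hprime, -⟩ := mem_primesPMOne.1 hp
    exact mem_Icc.2 ⟨Nat.log_pos one_lt_two hprime.two_le, Nat.log_mono_right hpX⟩
  calc _ = ∑ i ∈ Icc 1 (Nat.log 2 X), ∑ p ∈ primesPMOne m X with Nat.log 2 p = i, (1 / p : ℝ) :=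
        (sum_fiberwise_of_maps_to hmaps _).symm
    _ ≤ ∑ i ∈ Icc 1 (Nat.log 2 X), 8 / Real.log 2 * (Real.log m / m) * (i : ℝ)⁻¹ :=
        sum_le_sum fun i hi => sum_one_div_primesPMOne_dyadic_le hm (mem_Icc.1 hi).1 X
    _ = 8 / Real.log 2 * (Real.log m / m) * harmonic (Nat.log 2 X) := by
        rw [← mul_sum, harmonic_eq_sum_Icc]
        push_cast
        rfl
    _ ≤ _ := by
        gcongr
        exact harmonic_le_one_add_log _

lemma one_add_log_natLog_floor_le {x : ℝ} (hx : Real.exp (Real.exp 1) ≤ x) :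
    1 + Real.log (Nat.log 2 ⌊x⌋₊) ≤ 3 * Real.log (Real.log x) := by
  have hx0 : 0 < x := (Real.exp_pos _).trans_le hx
  have hlogx : Real.exp 1 ≤ Real.log x := (Real.le_log_iff_exp_le hx0).2 hx
  have hlogx0 : 0 < Real.log x := (Real.exp_pos 1).trans_le hlogx
  have hloglog : 1 ≤ Real.log (Real.log x) := (Real.le_log_iff_exp_le hlogx0).2 hlogx
  have hlog2 : (1 / 2 : ℝ) < Real.log 2 := by linarith [Real.log_two_gt_d9]
  rcases (Nat.log 2 ⌊x⌋₊).eq_zero_or_pos with h | h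
  · rw [h, Nat.cast_zero, Real.log_zero]
    linarith
  have hfloor : (0 : ℝ) < ⌊x⌋₊ := by
    exact_mod_cast Nat.pos_of_ne_zero fun h0 => by simp [h0] at h
  have hnatLog : (Nat.log 2 ⌊x⌋₊ : ℝ) ≤ 2 * Real.log x := by
    refine (Real.natLog_le_logb ⌊x⌋₊ 2).trans ?_
    rw [Nat.cast_ofNat, Real.logb, div_le_iff₀ (by linarith)]
    nlinarith [Real.log_le_log hfloor (Nat.floor_le hx0.le)]
  have := Real.log_le_log (Nat.cast_pos.2 h) hnatLog
  rw [Real.log_mul two_ne_zero hlogx0.ne'] at this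
  linarith [Real.log_two_lt_d9]

lemma sum_one_div_primesPMOne_floor_le {m : ℕ} (hm : 2 ≤ m) {x : ℝ}
    (hx : Real.exp (Real.exp 1) ≤ x) :
    ∑ p ∈ primesPMOne m ⌊x⌋₊, (1 / p : ℝ) ≤
      36 * Real.log (Real.log x) * (Real.log m / m) := by
  have hconst : 8 / Real.log 2 ≤ 12 := by
    rw [div_le_iff₀ (Real.log_pos one_lt_two)]
    linarith [Real.log_two_gt_d9]
  calc _ ≤ 8 / Real.log 2 * (Real.log m / m) * (1 + Real.log (Nat.log 2 ⌊x⌋₊)) :=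
        sum_one_div_primesPMOne_le hm ⌊x⌋₊
    _ ≤ 12 * (Real.log m / m) * (3 * Real.log (Real.log x)) := by
        have := Real.log_natCast_nonneg (Nat.log 2 ⌊x⌋₊)
        exact mul_le_mul (by gcongr) (one_add_log_natLog_floor_le hx) (by positivity)
          (by positivity)
    _ = _ := by ring

end SieveBound

section MeanOverlap

open scoped ArithmeticFunction.vonMangoldt

lemma sum_card_filter_dvd_le {ι : Type*} (T : Finset ι) (f : ι → ℕ) (X : ℕ) :
    ∑ N ∈ Ioc 0 X, (#{i ∈ T | f i ∣ N} : ℝ) ≤ X * ∑ i ∈ T, (1 / f i : ℝ) := by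
  have hswap : ∑ N ∈ Ioc 0 X, #{i ∈ T | f i ∣ N} = ∑ i ∈ T, X / f i := by
    simp only [← Nat.Ioc_filter_dvd_card_eq_div]
    exact sum_card_bipartiteAbove_eq_sum_card_bipartiteBelow fun N i => f i ∣ N
  calc ∑ N ∈ Ioc 0 X, (#{i ∈ T | f i ∣ N} : ℝ) = ∑ i ∈ T, ((X / f i : ℕ) : ℝ) := by
        exact_mod_cast hswap
    _ ≤ ∑ i ∈ T, (X / f i : ℝ) := sum_le_sum fun i _ => Nat.cast_div_le
    _ = X * ∑ i ∈ T, (1 / f i : ℝ) := by simp only [mul_sum, mul_one_div]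

lemma card_filter_dvd_sub_one_le_card_offDiag {T : Finset ℕ} (hT : ∀ p ∈ T, p.Prime) (N : ℕ) :
    #{p ∈ T | p ∣ N} - 1 ≤ #{w ∈ T.offDiag | w.1 * w.2 ∣ N} := by
  have hsub : {p ∈ T | p ∣ N}.offDiag ⊆ {w ∈ T.offDiag | w.1 * w.2 ∣ N} := by
    rintro ⟨p, q⟩ hpq
    simp only [mem_offDiag, mem_filter] at hpq ⊢
    obtain ⟨⟨hp, hpN⟩, ⟨hq, hqN⟩, hne⟩ := hpq
    exact ⟨⟨hp, hq, hne⟩, ((Nat.coprime_primes (hT p hp) (hT q hq)).2 hne).mul_dvd_of_dvd_of_dvd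
      hpN hqN⟩
  refine le_trans ?_ (card_le_card hsub)
  rw [offDiag_card, ← Nat.mul_sub_one]
  rcases (#{p ∈ T | p ∣ N}).eq_zero_or_pos with h | h
  · rw [h]
  · exact Nat.le_mul_of_pos_left _ h

lemma sum_card_filter_dvd_sub_one_le_sq {T : Finset ℕ} (hT : ∀ p ∈ T, p.Prime) (X : ℕ) :
    ∑ N ∈ Ioc 0 X, ((#{p ∈ T | p ∣ N} - 1 : ℕ) : ℝ) ≤ X * (∑ p ∈ T, (1 / p : ℝ)) ^ 2 := by
  calc _ ≤ ∑ N ∈ Ioc 0 X, (#{w ∈ T.offDiag | w.1 * w.2 ∣ N} : ℝ) :=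
        sum_le_sum fun N _ => Nat.cast_le.2 (card_filter_dvd_sub_one_le_card_offDiag hT N)
    _ ≤ X * ∑ w ∈ T.offDiag, (1 / (w.1 * w.2 : ℕ) : ℝ) := sum_card_filter_dvd_le _ _ X
    _ ≤ X * ∑ w ∈ T ×ˢ T, (1 / (w.1 * w.2 : ℕ) : ℝ) := by
        gcongr
        exact fun w hw => mem_product.2 ⟨(mem_offDiag.1 hw).1, (mem_offDiag.1 hw).2.1⟩
    _ = X * (∑ p ∈ T, (1 / p : ℝ)) ^ 2 := by
        rw [sq, sum_mul_sum, ← sum_product']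
        simp only [Nat.cast_mul, div_mul_div_comm, one_mul]

lemma sum_card_filter_dvd_sub_one_le_rpow {T : Finset ℕ} (hT : ∀ p ∈ T, p.Prime) (X : ℕ) {s : ℝ}
    (hs₁ : 1 ≤ s) (hs₂ : s ≤ 2) :
    ∑ N ∈ Ioc 0 X, ((#{p ∈ T | p ∣ N} - 1 : ℕ) : ℝ) ≤ X * (∑ p ∈ T, (1 / p : ℝ)) ^ s := by
  set S := ∑ p ∈ T, (1 / p : ℝ)
  have hS : 0 ≤ S := sum_nonneg fun p _ => by positivity
  rcases le_total S 1 with h | h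
  · refine (sum_card_filter_dvd_sub_one_le_sq hT X).trans ?_
    rw [← Real.rpow_two]
    gcongr ?_ * ?_
    exact Real.rpow_le_rpow_of_exponent_ge_of_imp hS h hs₂ fun _ h0 => by linarith
  · calc _ ≤ ∑ N ∈ Ioc 0 X, (#{p ∈ T | p ∣ N} : ℝ) :=
          sum_le_sum fun N _ => Nat.cast_le.2 (Nat.sub_le _ _)
      _ ≤ X * S := sum_card_filter_dvd_le T id X
      _ ≤ X * S ^ s := by
          gcongr
          exact Real.self_le_rpow_of_one_le h hs₁

-- With `c m = #{i ∈ P | m ∣ f i}`, the left side is `∑ Λ(m) c(m)`, where `c(m) = 0` unless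
-- `m ∣ k`, and `∑ Λ(m)` over `m ∣ k` is `log k`.
lemma sum_log_le_log_add_sum_vonMangoldt {ι : Type*} {P : Finset ι} {f : ι → ℕ} {k M : ℕ}
    (hk : k ≠ 0) (hfM : ∀ i ∈ P, f i ≤ M) (hfk : ∀ i ∈ P, f i ∣ k) :
    ∑ i ∈ P, Real.log (f i) ≤
      Real.log k + ∑ m ∈ Icc 1 M, Λ m * ((#{i ∈ P | m ∣ f i} - 1 : ℕ) : ℝ) := by
  have hlog : ∀ i ∈ P, Real.log (f i) = ∑ m ∈ Icc 1 M, if m ∣ f i then Λ m else 0 := by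
    intro i hi
    have hpos : 0 < f i := Nat.pos_of_dvd_of_pos (hfk i hi) hk.bot_lt
    rw [← sum_filter, ← ArithmeticFunction.vonMangoldt_sum]
    congr 1
    ext m
    simp only [Nat.mem_divisors, mem_filter, mem_Icc]
    exact ⟨fun h => ⟨⟨Nat.pos_of_dvd_of_pos h.1 hpos, (Nat.le_of_dvd hpos h.1).trans (hfM i hi)⟩,
      h.1⟩, fun h => ⟨h.2, hpos.ne'⟩⟩
  have hcount : ∀ m ∈ Icc 1 M, Λ m * (#{i ∈ P | m ∣ f i} : ℝ) ≤
      (if m ∣ k then Λ m else 0) + Λ m * ((#{i ∈ P | m ∣ f i} - 1 : ℕ) : ℝ) := by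
    intro m _
    have hΛ : 0 ≤ Λ m := ArithmeticFunction.vonMangoldt_nonneg
    split_ifs with hmk
    · have : (#{i ∈ P | m ∣ f i} : ℝ) ≤ 1 + (#{i ∈ P | m ∣ f i} - 1 : ℕ) := by
        norm_cast
        omega
      nlinarith
    · have : #{i ∈ P | m ∣ f i} = 0 := by
        rw [card_eq_zero, filter_eq_empty_iff]
        exact fun i hi hmi => hmk (hmi.trans (hfk i hi))
      simp [this]
  calc ∑ i ∈ P, Real.log (f i) = ∑ m ∈ Icc 1 M, Λ m * (#{i ∈ P | m ∣ f i} : ℝ) := by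
        rw [sum_congr rfl hlog, sum_comm]
        refine sum_congr rfl fun m _ => ?_
        rw [← sum_filter, sum_const, nsmul_eq_mul, mul_comm]
    _ ≤ ∑ m ∈ Icc 1 M with m ∣ k, Λ m +
          ∑ m ∈ Icc 1 M, Λ m * ((#{i ∈ P | m ∣ f i} - 1 : ℕ) : ℝ) := by
        rw [sum_filter, ← sum_add_distrib]
        exact sum_le_sum hcount
    _ ≤ _ := by
        rw [← ArithmeticFunction.vonMangoldt_sum]
        gcongr
        exact fun m hm => Nat.mem_divisors.2 ⟨(mem_filter.1 hm).2, hk⟩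

/-- `∑ Λ(m) (#{p ∣ N : p ≡ ±1 (mod m)} - 1)⁺` over `m ≤ X + 1`. For `N ≤ X` it bounds the
logarithm of the quotient of `∏ ord(A,p)` by `ord(A,N)`, for every `A` at once. -/
noncomputable def overlap (X N : ℕ) : ℝ :=
  ∑ m ∈ Icc 1 (X + 1), Λ m * ((#{p ∈ primesPMOne m X | p ∣ N} - 1 : ℕ) : ℝ)

lemma overlap_nonneg (X N : ℕ) : 0 ≤ overlap X N :=
  sum_nonneg fun _ _ => mul_nonneg ArithmeticFunction.vonMangoldt_nonneg (Nat.cast_nonneg _)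

lemma sum_log_le_log_add_overlap {P : Finset ℕ} {o : ℕ → ℕ} {k X N : ℕ} (hk : k ≠ 0)
    (hN : N ∈ Ioc 0 X) (hP : ∀ p ∈ P, p.Prime ∧ p ∣ N) (ho : ∀ p ∈ P, o p ∣ p - 1 ∨ o p ∣ p + 1)
    (hok : ∀ p ∈ P, o p ∣ k) :
    ∑ p ∈ P, Real.log (o p) ≤ Real.log k + overlap X N := by
  obtain ⟨hN0, hNX⟩ := mem_Ioc.1 hN
  have hpX : ∀ p ∈ P, p ≤ X := fun p hp => (Nat.le_of_dvd hN0 (hP p hp).2).trans hNX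
  have hoX : ∀ p ∈ P, o p ≤ X + 1 := by
    intro p hp
    have := (hP p hp).1.two_le
    have := hpX p hp
    rcases ho p hp with h | h <;> have := Nat.le_of_dvd (by omega) h <;> omega
  refine (sum_log_le_log_add_sum_vonMangoldt hk hoX hok).trans ?_
  rw [overlap]
  gcongr with m _
  intro p hp
  obtain ⟨hpP, hm⟩ := mem_filter.1 hp
  exact mem_filter.2 ⟨mem_primesPMOne.2
    ⟨hpX p hpP, (hP p hpP).1, (ho p hpP).imp hm.trans hm.trans⟩, (hP p hpP).2⟩

lemma sum_overlap_le (X : ℕ) {s : ℝ} (hs₁ : 1 ≤ s) (hs₂ : s ≤ 2) :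
    ∑ N ∈ Ioc 0 X, overlap X N ≤
      X * ∑ m ∈ Icc 1 (X + 1), Λ m * (∑ p ∈ primesPMOne m X, (1 / p : ℝ)) ^ s := by
  simp only [overlap]
  rw [sum_comm, mul_sum]
  refine sum_le_sum fun m _ => ?_
  rw [← mul_sum, mul_left_comm]
  exact mul_le_mul_of_nonneg_left (sum_card_filter_dvd_sub_one_le_rpow
    (fun p hp => (mem_primesPMOne.1 hp).2.1) X hs₁ hs₂) ArithmeticFunction.vonMangoldt_nonneg

lemma summable_vonMangoldt_mul_log_div_rpow {s : ℝ} (hs : 1 < s) :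
    Summable fun m : ℕ => Λ m * (Real.log m / m) ^ s := by
  have hlog : (fun m : ℕ => Real.log m ^ (1 + s)) =O[Filter.atTop]
      fun m : ℕ => (m : ℝ) ^ ((s - 1) / 2) :=
    ((isLittleO_log_rpow_rpow_atTop (1 + s) (by linarith)).comp_tendsto
      tendsto_natCast_atTop_atTop).isBigO
  refine summable_of_isBigO_nat
    (Real.summable_nat_rpow.2 (show -((1 + s) / 2) < -1 by linarith)) ?_
  calc (fun m : ℕ => Λ m * (Real.log m / m) ^ s)
      =O[Filter.atTop] fun m : ℕ => Real.log m ^ (1 + s) * (m : ℝ) ^ (-s) := by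
        refine .of_norm_eventuallyLE ?_
        filter_upwards [Filter.eventually_gt_atTop 1] with m hm
        have hlogm : 0 < Real.log m := Real.log_pos (Nat.one_lt_cast.2 hm)
        rw [Real.norm_of_nonneg (by positivity), Real.rpow_one_add' hlogm.le (by linarith),
          Real.div_rpow hlogm.le m.cast_nonneg, Real.rpow_neg m.cast_nonneg, mul_assoc,
          ← div_eq_mul_inv]
        gcongr
        exact ArithmeticFunction.vonMangoldt_le_log
    _ =O[Filter.atTop] fun m : ℕ => (m : ℝ) ^ ((s - 1) / 2) * (m : ℝ) ^ (-s) :=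
        hlog.mul (Asymptotics.isBigO_refl _ _)
    _ =ᶠ[Filter.atTop] fun m : ℕ => (m : ℝ) ^ (-((1 + s) / 2)) := by
        filter_upwards [Filter.eventually_gt_atTop 0] with m hm
        rw [← Real.rpow_add (Nat.cast_pos.2 hm)]
        congr 1
        ring

lemma exists_sum_overlap_le {s : ℝ} (hs₁ : 1 < s) (hs₂ : s ≤ 2) :
    ∃ K, ∀ x, Real.exp (Real.exp 1) ≤ x →
      ∑ N ∈ Ioc 0 ⌊x⌋₊, overlap ⌊x⌋₊ N ≤ x * (K * Real.log (Real.log x) ^ s) := by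
  refine ⟨36 ^ s * ∑' m : ℕ, Λ m * (Real.log m / m) ^ s, fun x hx => ?_⟩
  have hx0 : 0 < x := (Real.exp_pos _).trans_le hx
  have hlogx : Real.exp 1 ≤ Real.log x := (Real.le_log_iff_exp_le hx0).2 hx
  have hL : 0 ≤ Real.log (Real.log x) :=
    Real.log_nonneg ((Real.one_le_exp zero_le_one).trans hlogx)
  set L := Real.log (Real.log x)
  have hterm : ∀ m : ℕ, Λ m * (∑ p ∈ primesPMOne m ⌊x⌋₊, (1 / p : ℝ)) ^ s ≤
      (36 * L) ^ s * (Λ m * (Real.log m / m) ^ s) := by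
    intro m
    rcases lt_or_ge m 2 with hm | hm
    · interval_cases m <;> simp
    · rw [mul_left_comm, ← Real.mul_rpow (by positivity) (by positivity)]
      gcongr
      exact sum_one_div_primesPMOne_floor_le hm hx
  have hnonneg : ∀ m : ℕ, 0 ≤ Λ m * (Real.log m / m) ^ s := fun m =>
    mul_nonneg ArithmeticFunction.vonMangoldt_nonneg (by positivity)
  calc _ ≤ ⌊x⌋₊ * ∑ m ∈ Icc 1 (⌊x⌋₊ + 1), Λ m * (∑ p ∈ primesPMOne m ⌊x⌋₊, (1 / p : ℝ)) ^ s :=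
        sum_overlap_le _ hs₁.le hs₂
    _ ≤ ⌊x⌋₊ * ((36 * L) ^ s * ∑' m : ℕ, Λ m * (Real.log m / m) ^ s) := by
        gcongr
        refine (sum_le_sum fun m _ => hterm m).trans ?_
        rw [← mul_sum]
        gcongr
        exact (summable_vonMangoldt_mul_log_div_rpow hs₁).sum_le_tsum _ fun m _ => hnonneg m
    _ ≤ x * ((36 * L) ^ s * ∑' m : ℕ, Λ m * (Real.log m / m) ^ s) := by
        gcongr
        exact Nat.floor_le hx0.le
    _ = _ := by rw [Real.mul_rpow (by norm_num) hL]; ring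

lemma eventually_card_overlap_gt_le {c α ε : ℝ} (hc : 0 < c) (hα : 1 < α) (hε : 0 < ε) :
    ∀ᶠ x : ℝ in Filter.atTop,
      (#{N ∈ Ioc 0 ⌊x⌋₊ | c * Real.log (Real.log x) ^ α < overlap ⌊x⌋₊ N} : ℝ) ≤ ε * x := by
  obtain ⟨s, hs₁, hs⟩ := exists_between (lt_min hα one_lt_two)
  obtain ⟨hsα, hs₂⟩ := lt_min_iff.1 hs
  obtain ⟨K, hK⟩ := exists_sum_overlap_le hs₁ hs₂.le
  have hloglog : Filter.Tendsto (fun x => Real.log (Real.log x)) Filter.atTop Filter.atTop :=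
    Real.tendsto_log_atTop.comp Real.tendsto_log_atTop
  have hdecay : Filter.Tendsto (fun x => K * Real.log (Real.log x) ^ (-(α - s)))
      Filter.atTop (nhds 0) := by
    simpa using ((tendsto_rpow_neg_atTop (sub_pos.2 hsα)).comp hloglog).const_mul K
  filter_upwards [Filter.eventually_ge_atTop (Real.exp (Real.exp 1)),
    hloglog.eventually_gt_atTop 0, hdecay.eventually_le_const (mul_pos hε hc)] with x hx hL hdec
  specialize hK x hx
  set L := Real.log (Real.log x)
  set B := {N ∈ Ioc 0 ⌊x⌋₊ | c * L ^ α < overlap ⌊x⌋₊ N}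
  have hx0 : 0 < x := (Real.exp_pos _).trans_le hx
  refine le_of_mul_le_mul_right ?_ (show 0 < c * L ^ α by positivity)
  calc (#B : ℝ) * (c * L ^ α) ≤ ∑ N ∈ B, overlap ⌊x⌋₊ N := by
        rw [← nsmul_eq_mul]
        exact card_nsmul_le_sum _ _ _ fun N hN => (mem_filter.1 hN).2.le
    _ ≤ ∑ N ∈ Ioc 0 ⌊x⌋₊, overlap ⌊x⌋₊ N :=
        sum_le_sum_of_subset_of_nonneg (filter_subset _ _) fun N _ _ => overlap_nonneg _ N
    _ ≤ x * (K * L ^ s) := hK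
    _ = x * (K * L ^ (-(α - s)) * L ^ α) := by
        rw [mul_assoc K, ← Real.rpow_add hL]
        congr 3
        ring
    _ ≤ x * (ε * c * L ^ α) := by gcongr
    _ = ε * x * (c * L ^ α) := by ring

end MeanOverlap

section OrderModPrime

variable {p : ℕ} [Fact p.Prime] {R : Type*} [Ring R] [Algebra (ZMod p) R] [CharP R p]
  {t : ZMod p} {M : R}

-- `B = 2M - t` satisfies `B² = t² - 4`, so the Frobenius map sends `2M = t + B` to
-- `t + (t² - 4) ^ (p / 2) B`, and the power of `t² - 4` is `±1`.
lemma pow_char_eq_self_or_eq_trace_sub (hp : p ≠ 2) (ht : t ^ 2 - 4 ≠ 0)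
    (hM : M * M = t • M - 1) : M ^ p = M ∨ M ^ p = t • 1 - M := by
  have htwo : (2 : ZMod p) ≠ 0 := fun h =>
    hp ((Nat.prime_dvd_prime_iff_eq Fact.out Nat.prime_two).1
      ((ZMod.natCast_eq_zero_iff 2 p).1 (by exact_mod_cast h)))
  set B : R := (2 : ZMod p) • M - t • 1 with hB
  have hBsq : B ^ 2 = (t ^ 2 - 4) • 1 := by
    rw [sq, hB]
    simp only [sub_mul, mul_sub, smul_mul_assoc, mul_smul_comm, hM, one_mul, mul_one]
    module
  have hBp : B ^ p = (t ^ 2 - 4) ^ (p / 2) • B := by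
    have hodd : 2 * (p / 2) + 1 = p :=
      Nat.two_mul_div_two_add_one_of_odd ((Fact.out : p.Prime).odd_of_ne_two hp)
    calc B ^ p = (B ^ 2) ^ (p / 2) * B := by rw [← pow_mul, ← pow_succ, hodd]
      _ = (t ^ 2 - 4) ^ (p / 2) • B := by rw [hBsq, smul_pow, one_pow, smul_one_mul]
  have hfrob : (2 : ZMod p) • M ^ p = t • 1 + (t ^ 2 - 4) ^ (p / 2) • B := by
    calc (2 : ZMod p) • M ^ p = ((2 : ZMod p) • M) ^ p := by rw [smul_pow, ZMod.pow_card]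
      _ = (t • 1 + B) ^ p := by rw [hB, add_sub_cancel]
      _ = t • 1 + (t ^ 2 - 4) ^ (p / 2) • B := by
        rw [add_pow_char_of_commute p ((Commute.one_left B).smul_left t), hBp, smul_pow, one_pow,
          ZMod.pow_card]
  refine (ZMod.pow_div_two_eq_neg_one_or_one p ht).imp (fun h => ?_) fun h => ?_ <;>
  · refine (isUnit_iff_ne_zero.2 htwo).smul_left_cancel.1 ?_
    rw [hfrob, h, hB]
    module

lemma orderOf_dvd_pred_or_succ (hp : p ≠ 2) (ht : t ^ 2 - 4 ≠ 0) (hM : M * M = t • M - 1) :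
    orderOf M ∣ p - 1 ∨ orderOf M ∣ p + 1 := by
  have hinv : (t • 1 - M) * M = 1 := by
    rw [sub_mul, hM, smul_one_mul, sub_sub_cancel]
  have hinv' : M * (t • 1 - M) = 1 := by
    rw [mul_sub, hM, mul_smul_comm, mul_one, sub_sub_cancel]
  simp only [orderOf_dvd_iff_pow_eq_one]
  refine (pow_char_eq_self_or_eq_trace_sub hp ht hM).imp (fun h => ?_) fun h => ?_
  · calc M ^ (p - 1) = M ^ (p - 1) * M * (t • 1 - M) := by rw [mul_assoc, hinv', mul_one]
      _ = 1 := by rw [← pow_succ, Nat.sub_add_cancel (Fact.out : p.Prime).one_le, h, hinv']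
  · rw [pow_succ, h, hinv]

end OrderModPrime

section MatrixOrder

variable {A : Matrix (Fin 2) (Fin 2) ℤ} {N p : ℕ}

lemma mul_self_eq_trace_smul_sub_det {R : Type*} [CommRing R] (M : Matrix (Fin 2) (Fin 2) R) :
    M * M = M.trace • M - M.det • 1 := by
  ext i j
  fin_cases i <;> fin_cases j <;>
    simp [mul_apply, Fin.sum_univ_two, trace_fin_two, det_fin_two] <;> ring

lemma sInf_pow_eq_one_eq_orderOf {G : Type*} [Monoid G] (g : G) :
    sInf {k | 0 < k ∧ g ^ k = 1} = orderOf g := by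
  rcases (orderOf g).eq_zero_or_pos with h | h
  · rw [h, Nat.sInf_eq_zero]
    exact Or.inr (Set.eq_empty_of_forall_notMem fun k hk => orderOf_eq_zero_iff'.1 h k hk.1 hk.2)
  · exact le_antisymm (Nat.sInf_le ⟨h, pow_orderOf_eq_one g⟩)
      (le_csInf ⟨_, h, pow_orderOf_eq_one g⟩ fun k hk => orderOf_le_of_pow_eq_one hk.1 hk.2)

lemma matOrd_eq_orderOf (A : Matrix (Fin 2) (Fin 2) ℤ) (N : ℕ) :
    matOrd A N = orderOf ((Int.castRingHom (ZMod N)).mapMatrix A) := by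
  rw [← sInf_pow_eq_one_eq_orderOf, matOrd]
  congr! 4 with k
  rw [← map_pow, ← sub_eq_zero, ← map_one (Int.castRingHom (ZMod N)).mapMatrix, ← map_sub,
    ← Matrix.ext_iff]
  simp only [RingHom.mapMatrix_apply, Matrix.map_apply, Matrix.zero_apply, eq_intCast,
    ZMod.intCast_zmod_eq_zero_iff_dvd]

lemma matOrd_pos (hA : A.det = 1) (hN : N ≠ 0) : 0 < matOrd A N := by
  have : NeZero N := ⟨hN⟩
  rw [matOrd_eq_orderOf, orderOf_pos_iff, isOfFinOrder_iff_isUnit, isUnit_iff_isUnit_det,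
    ← RingHom.map_det, hA, map_one]
  exact isUnit_one

lemma matOrd_dvd_matOrd (A : Matrix (Fin 2) (Fin 2) ℤ) (h : p ∣ N) :
    matOrd A p ∣ matOrd A N := by
  have hcast : (Int.castRingHom (ZMod p)).mapMatrix A =
      (ZMod.castHom h (ZMod p)).mapMatrix ((Int.castRingHom (ZMod N)).mapMatrix A) := by
    ext i j
    simp
  rw [matOrd_eq_orderOf, matOrd_eq_orderOf, hcast]
  exact orderOf_dvd_of_pow_eq_one (by rw [← map_pow, pow_orderOf_eq_one, map_one])

lemma matOrd_dvd_pred_or_succ (hA : A.det = 1) (hp : p.Prime)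
    (hD : ¬ p ∣ (4 * (A.trace ^ 2 - 4)).natAbs) :
    matOrd A p ∣ p - 1 ∨ matOrd A p ∣ p + 1 := by
  have : Fact p.Prime := ⟨hp⟩
  rw [← Int.natCast_dvd] at hD
  have hp2 : p ≠ 2 := by
    rintro rfl
    exact hD ((show ((2 : ℕ) : ℤ) ∣ 4 by norm_num).mul_right _)
  have hdisc : (A.trace : ZMod p) ^ 2 - 4 ≠ 0 := fun h =>
    hD (Dvd.dvd.mul_left ((ZMod.intCast_zmod_eq_zero_iff_dvd _ p).1 (by exact_mod_cast h)) 4)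
  rw [matOrd_eq_orderOf]
  refine orderOf_dvd_pred_or_succ hp2 hdisc ?_
  have hdet : ((Int.castRingHom (ZMod p)).mapMatrix A).det = 1 := by
    rw [← RingHom.map_det, hA, map_one]
  have htrace : ((Int.castRingHom (ZMod p)).mapMatrix A).trace = A.trace := by
    simp [trace_fin_two]
  rw [mul_self_eq_trace_smul_sub_det, hdet, htrace, one_smul]

lemma squarefree_sqfPart (N : ℕ) : Squarefree (sqfPart N) := by
  refine squarefree_prod_of_pairwise_isCoprime (fun p hp q hq hpq => ?_) fun p hp => ?_
  · exact Nat.coprime_iff_isRelPrime.1 (Nat.Coprime.pow _ _ ((Nat.coprime_primes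
      (Nat.prime_of_mem_primeFactors hp) (Nat.prime_of_mem_primeFactors hq)).2 hpq))
  · rcases Nat.mod_two_eq_zero_or_one (N.factorization p) with h | h
    · rw [h, pow_zero]
      exact squarefree_one
    · rw [h, pow_one]
      exact (Nat.prime_of_mem_primeFactors hp).squarefree

lemma sqfPart_dvd (N : ℕ) : sqfPart N ∣ N := by
  rcases eq_or_ne N 0 with rfl | hN
  · exact dvd_zero _
  · calc sqfPart N ∣ ∏ p ∈ N.primeFactors, p ^ N.factorization p :=
          prod_dvd_prod_of_dvd _ _ fun p _ => pow_dvd_pow p (Nat.mod_le _ 2)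
      _ = N := Nat.prod_factorization_pow_eq_self hN

lemma dZero_dvd (A : Matrix (Fin 2) (Fin 2) ℤ) (N : ℕ) : dZero A N ∣ N :=
  (Nat.div_dvd_of_dvd (Nat.gcd_dvd_left _ _)).trans (sqfPart_dvd N)

lemma dZero_coprime_disc (A : Matrix (Fin 2) (Fin 2) ℤ) (N : ℕ) :
    (dZero A N).Coprime (4 * (A.trace ^ 2 - 4)).natAbs := by
  have hsq := squarefree_sqfPart N
  rcases eq_or_ne (4 * (A.trace ^ 2 - 4)).natAbs 0 with hD | hD
  · rw [dZero, hD, Nat.gcd_zero_right, Nat.div_self hsq.ne_zero.bot_lt]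
    exact Nat.coprime_one_left 0
  · exact Nat.coprime_div_gcd_of_squarefree hsq hD

end MatrixOrder

lemma prod_matOrd_le_mul_exp_overlap {A : Matrix (Fin 2) (Fin 2) ℤ} (hA : A.det = 1) {X N : ℕ}
    (hN : N ∈ Ioc 0 X) :
    ∏ p ∈ (dZero A N).primeFactors, (matOrd A p : ℝ) ≤ matOrd A N * Real.exp (overlap X N) := by
  have hpN : ∀ p ∈ (dZero A N).primeFactors, p ∣ N := fun p hp =>
    (Nat.dvd_of_mem_primeFactors hp).trans (dZero_dvd A N)
  have hmod : ∀ p ∈ (dZero A N).primeFactors, matOrd A p ∣ p - 1 ∨ matOrd A p ∣ p + 1 := by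
    intro p hp
    have hprime := Nat.prime_of_mem_primeFactors hp
    exact matOrd_dvd_pred_or_succ hA hprime ((hprime.coprime_iff_not_dvd).1
      ((dZero_coprime_disc A N).coprime_dvd_left (Nat.dvd_of_mem_primeFactors hp)))
  have hNpos : 0 < matOrd A N := matOrd_pos hA (mem_Ioc.1 hN).1.ne'
  have hpos : ∀ p ∈ (dZero A N).primeFactors, (0 : ℝ) < matOrd A p := fun p hp =>
    Nat.cast_pos.2 (matOrd_pos hA (Nat.prime_of_mem_primeFactors hp).ne_zero)
  rw [← Real.log_le_log_iff (prod_pos hpos) (by positivity),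
    Real.log_prod fun p hp => (hpos p hp).ne', Real.log_mul (by positivity) (by positivity),
    Real.log_exp]
  exact sum_log_le_log_add_overlap hNpos.ne' hN
    (fun p hp => ⟨Nat.prime_of_mem_primeFactors hp, hpN p hp⟩) hmod
    fun p hp => matOrd_dvd_matOrd A (hpN p hp)

theorem order_ge_prod_for_most_general {c α ε : ℝ} (hc : 0 < c) (hα : 1 < α) (hε : 0 < ε) :
    ∀ᶠ x : ℝ in Filter.atTop, ∀ A : Matrix (Fin 2) (Fin 2) ℤ, A.det = 1 →
      ({N : ℕ | 1 ≤ N ∧ (N : ℝ) ≤ x ∧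
          (matOrd A N : ℝ) <
            (∏ p ∈ (dZero A N).primeFactors, (matOrd A p : ℝ)) /
              Real.exp (c * Real.log (Real.log x) ^ α)}.ncard : ℝ) ≤ ε * x := by
  filter_upwards [eventually_card_overlap_gt_le hc hα hε] with x hcard A hA
  refine le_trans ?_ hcard
  rw [← Set.ncard_coe_finset]
  refine Nat.cast_le.2 (Set.ncard_le_ncard ?_ (finite_toSet _))
  rintro N ⟨hN1, hNx, hlt⟩
  have hN : N ∈ Ioc 0 ⌊x⌋₊ := mem_Ioc.2 ⟨hN1, Nat.le_floor hNx⟩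
  have hpos : (0 : ℝ) < matOrd A N := Nat.cast_pos.2 (matOrd_pos hA (by omega))
  rw [lt_div_iff₀ (Real.exp_pos _)] at hlt
  exact mem_filter.2 ⟨hN, Real.exp_lt_exp.1 (lt_of_mul_lt_mul_left
    (hlt.trans_le (prod_matOrd_le_mul_exp_overlap hA hN)) hpos.le)⟩

/-- For all but `o(x)` of the `N ≤ x`,
`ord(A,N) ≥ (∏_{p ∣ d₀(N)} ord(A,p)) / exp(3 (log log x)⁴)`. -/
theorem order_ge_prod_for_most
    (A : Matrix (Fin 2) (Fin 2) ℤ) (hA : A.det = 1) (htr : 2 < |A.trace|) :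
    ∀ ε : ℝ, 0 < ε → ∃ x₀ : ℝ, ∀ x : ℝ, x₀ ≤ x →
      ({N : ℕ | 1 ≤ N ∧ (N : ℝ) ≤ x ∧
          (matOrd A N : ℝ) <
            (∏ p ∈ (dZero A N).primeFactors, (matOrd A p : ℝ)) /
              Real.exp (3 * Real.log (Real.log x) ^ 4)}.ncard : ℝ) ≤
        ε * x := by
  intro ε hε
  obtain ⟨x₀, h⟩ := Filter.eventually_atTop.1
    (order_ge_prod_for_most_general (c := 3) (α := 4) three_pos (by norm_num) hε)
  exact ⟨x₀, fun x hx => by simpa only [Real.rpow_ofNat] using h x hx A hA⟩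
end
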